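/- arXiv:1910.02502 — 2 statements merged into one kernel-verified Lean document; each statement's English description precedes it below -/
import Mathlib

section
/- Let d ≥ 1, t ≠ 0 and 0 < ρ < ∞. For Schwartz functions u₁, u₂ on ℝ^d set v_j = M_t U(−t) u_j, where U(τ)f = F^{−1}(e^{−4π² i τ |ξ|²} Ff), M_t w(x) = e^{i|x|²/(4t)} w(x), and let Ω = v₁ ∗ (R v̄₂) with R w(x) = w(−x) and v̄₂ the complex conjugate of v₂. Then ‖F(M_t U(−t) u)‖_{L^{2ρ}(ℝ^d)} = (4π|t|)^{(1 − 1/ρ)d/2} ‖u‖_{L^{2ρ}(ℝ^d)} for every Schwartz u, and consequently ‖F Ω‖_{L^{ρ}(ℝ^d)} ≤ (4π|t|)^{d(1 − 1/ρ)} ‖u₁‖_{L^{2ρ}(ℝ^d)} ‖u₂‖_{L^{2ρ}(ℝ^d)}. -/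
open MeasureTheory Real FourierTransform RealInnerProductSpace
open scoped ENNReal

/-- The free Schrödinger propagator `U(τ)f = 𝓕⁻¹(e^{-4π²iτ|ξ|²} 𝓕f)`,
written as an explicit Fourier integral. -/
noncomputable def schrodingerProp (d : ℕ) (τ : ℝ) (f : EuclideanSpace ℝ (Fin d) → ℂ) :
    EuclideanSpace ℝ (Fin d) → ℂ :=
  fun x => ∫ ξ : EuclideanSpace ℝ (Fin d),
    Complex.exp (-(4 * (π : ℂ) ^ 2 * (τ : ℂ) * (‖ξ‖ : ℂ) ^ 2) * Complex.I) *
      𝓕 f ξ * Complex.exp (2 * (π : ℂ) * Complex.I * (⟪x, ξ⟫ : ℝ))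

/-- The multiplication operator `M_t w(x) = e^{i|x|²/(4t)} w(x)`. -/
noncomputable def Mt (d : ℕ) (t : ℝ) (w : EuclideanSpace ℝ (Fin d) → ℂ) :
    EuclideanSpace ℝ (Fin d) → ℂ :=
  fun x => Complex.exp (Complex.I * (‖x‖ : ℂ) ^ 2 / (4 * (t : ℂ))) * w x

/-- Convolution of two complex functions on `ℝ^d`. -/
noncomputable def convC {d : ℕ} (f g : EuclideanSpace ℝ (Fin d) → ℂ) :
    EuclideanSpace ℝ (Fin d) → ℂ :=
  fun x => ∫ y, f y * g (x - y)

lemma expI_temperate : Function.HasTemperateGrowth (fun s : ℝ => Complex.exp (Complex.I * (s : ℂ))) := by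
  have hd : ∀ n : ℕ, iteratedDeriv n (fun s : ℝ => Complex.exp (Complex.I * (s : ℂ))) =
      fun s : ℝ => Complex.I ^ n * Complex.exp (Complex.I * (s : ℂ)) := by
    intro n
    induction n with
    | zero => simp
    | succ n ih =>
      rw [iteratedDeriv_succ, ih]
      funext s
      have h1 : HasDerivAt (fun s : ℝ => Complex.I * (s : ℂ)) (Complex.I * 1) s :=
        (Complex.ofRealCLM.hasDerivAt (x := s)).const_mul Complex.I
      have h2 := (h1.cexp).const_mul (Complex.I ^ n)
      rw [h2.deriv]
      ring
  refine ⟨?_, fun n => ⟨0, 1, fun x => ?_⟩⟩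
  · exact (contDiff_const.mul Complex.ofRealCLM.contDiff).cexp
  · rw [norm_iteratedFDeriv_eq_norm_iteratedDeriv, hd]
    simp [mul_comm Complex.I, Complex.norm_exp_ofReal_mul_I]

lemma chirp_temperate (d : ℕ) (a : ℝ) :
    Function.HasTemperateGrowth (fun x : EuclideanSpace ℝ (Fin d) =>
      Complex.exp (Complex.I * ((a * ‖x‖ ^ 2 : ℝ) : ℂ))) := by
  have h : Function.HasTemperateGrowth (fun x : EuclideanSpace ℝ (Fin d) => a * ‖x‖ ^ 2) :=
    (Function.HasTemperateGrowth.const a).mul (by fun_prop)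
  exact expI_temperate.comp h

/-- The chirped Schwartz function. -/
noncomputable def chirp (d : ℕ) (a : ℝ) (u : SchwartzMap (EuclideanSpace ℝ (Fin d)) ℂ) :
    SchwartzMap (EuclideanSpace ℝ (Fin d)) ℂ :=
  SchwartzMap.smulLeftCLM ℂ (fun x : EuclideanSpace ℝ (Fin d) =>
      Complex.exp (Complex.I * ((a * ‖x‖ ^ 2 : ℝ) : ℂ))) u

lemma chirp_apply (d : ℕ) (a : ℝ) (u : SchwartzMap (EuclideanSpace ℝ (Fin d)) ℂ)
    (x : EuclideanSpace ℝ (Fin d)) :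
    chirp d a u x = Complex.exp (Complex.I * ((a * ‖x‖ ^ 2 : ℝ) : ℂ)) * u x := by
  rw [chirp, SchwartzMap.smulLeftCLM_apply_apply (chirp_temperate d a), smul_eq_mul]

open Filter Topology in
lemma schrodinger_kernel (d : ℕ) (t : ℝ) (ht : t ≠ 0)
    (u : SchwartzMap (EuclideanSpace ℝ (Fin d)) ℂ) (x : EuclideanSpace ℝ (Fin d)) :
    schrodingerProp d (-t) u x =
      ((π : ℂ) / (-(4 * (π : ℂ) ^ 2 * t) * Complex.I)) ^ ((d : ℂ) / 2) *
        ∫ y, Complex.exp (-(π : ℂ) ^ 2 * (‖x - y‖ : ℂ) ^ 2 / (-(4 * (π : ℂ) ^ 2 * t) * Complex.I)) * u y := by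
  set b : ℝ → ℂ := fun ε => (ε : ℂ) + -(4 * (π : ℂ) ^ 2 * t) * Complex.I with hb
  have hbre : ∀ ε, (b ε).re = ε := by
    intro ε
    have : b ε = (ε : ℂ) + ((-(4 * π ^ 2 * t) : ℝ) : ℂ) * Complex.I := by simp [hb]
    rw [this, Complex.add_re, Complex.re_ofReal_mul]; simp
  have hbim : ∀ ε, (b ε).im = -(4 * π ^ 2 * t) := by
    intro ε
    have : b ε = (ε : ℂ) + ((-(4 * π ^ 2 * t) : ℝ) : ℂ) * Complex.I := by simp [hb]
    rw [this, Complex.add_im, Complex.im_ofReal_mul]; simp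
  have him0 : -(4 * π ^ 2 * t) ≠ 0 := by
    have := Real.pi_pos.ne'
    simp [ht, this]
  have hb0 : ∀ ε, b ε ≠ 0 := by
    intro ε h
    have := hbim ε
    rw [h] at this
    exact him0 (by simpa using this.symm)
  have hbzero : b 0 = -(4 * (π : ℂ) ^ 2 * t) * Complex.I := by simp [hb]
  have hbc : Continuous b := by fun_prop
  have hbt : Tendsto b (𝓝[>] 0) (𝓝 (b 0)) := hbc.continuousAt.tendsto.mono_left nhdsWithin_le_nhds
  have hu : Integrable (⇑u) := u.integrable
  have hFu : Integrable (𝓕 (⇑u)) := by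
    rw [← SchwartzMap.fourier_coe]; exact (𝓕 u).integrable
  -- left side
  have A : Tendsto (fun ε : ℝ => ∫ ξ, Complex.exp (-b ε * ‖ξ‖ ^ 2 + 2 * π * Complex.I * (⟪x, ξ⟫ : ℝ)) • 𝓕 (⇑u) ξ)
      (𝓝[>] 0) (𝓝 (schrodingerProp d (-t) u x)) := by
    have e : schrodingerProp d (-t) u x =
        ∫ ξ, Complex.exp (-b 0 * ‖ξ‖ ^ 2 + 2 * π * Complex.I * (⟪x, ξ⟫ : ℝ)) • 𝓕 (⇑u) ξ := by
      unfold schrodingerProp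
      congr 1
      funext ξ
      rw [Complex.exp_add, hbzero, smul_eq_mul]
      rw [mul_right_comm]
      congr 3
      push_cast
      ring
    rw [e]
    apply tendsto_integral_filter_of_dominated_convergence (fun ξ => ‖𝓕 (⇑u) ξ‖) _ _ hFu.norm
    · filter_upwards with ξ
      apply Tendsto.smul_const
      exact (((hbt.neg).mul_const _).add_const _).cexp
    · filter_upwards with ε
      have hc : Continuous (fun ξ : EuclideanSpace ℝ (Fin d) =>
        Complex.exp (-b ε * ‖ξ‖ ^ 2 + 2 * π * Complex.I * (⟪x, ξ⟫ : ℝ))) := by fun_prop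
      exact hc.aestronglyMeasurable.smul hFu.1
    · filter_upwards [self_mem_nhdsWithin] with ε (hε : 0 < ε)
      filter_upwards with ξ
      rw [norm_smul, Complex.norm_exp]
      have : (-b ε * (‖ξ‖ : ℂ) ^ 2 + 2 * π * Complex.I * (⟪x, ξ⟫ : ℝ)).re = -ε * ‖ξ‖ ^ 2 := by
        have h1 : (2 * π * Complex.I * (⟪x, ξ⟫ : ℝ) : ℂ) = ((2 * π * ⟪x, ξ⟫ : ℝ) : ℂ) * Complex.I := by
          push_cast; ring
        have h2 : (-b ε * (‖ξ‖ : ℂ) ^ 2) = ((‖ξ‖ ^ 2 : ℝ) : ℂ) * (-b ε) := by push_cast; ring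
        rw [h1, h2, Complex.add_re, Complex.re_ofReal_mul, Complex.neg_re, hbre]
        simp; ring
      rw [this]
      apply mul_le_of_le_one_left (norm_nonneg _)
      rw [Real.exp_le_one_iff]
      have : 0 ≤ ε * ‖ξ‖ ^ 2 := by positivity
      linarith
  have B : Tendsto (fun ε : ℝ => ((π : ℂ) / b ε) ^ ((d : ℂ) / 2) *
      ∫ y, Complex.exp (-(π : ℂ) ^ 2 * (‖x - y‖ : ℂ) ^ 2 / b ε) * u y)
      (𝓝[>] 0) (𝓝 (((π : ℂ) / b 0) ^ ((d : ℂ) / 2) *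
      ∫ y, Complex.exp (-(π : ℂ) ^ 2 * (‖x - y‖ : ℂ) ^ 2 / b 0) * u y)) := by
    apply Tendsto.mul
    · have h1 : Tendsto (fun ε => (π : ℂ) / b ε) (𝓝[>] 0) (𝓝 ((π : ℂ) / b 0)) :=
        tendsto_const_nhds.div hbt (hb0 0)
      refine h1.cpow tendsto_const_nhds (Or.inr ?_)
      rw [div_eq_mul_inv, Complex.im_ofReal_mul, Complex.inv_im, hbim]
      have : Complex.normSq (b 0) ≠ 0 := by simpa using hb0 0
      exact mul_ne_zero Real.pi_pos.ne' (div_ne_zero (neg_ne_zero.2 him0) this)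
    · apply tendsto_integral_filter_of_dominated_convergence (fun ξ => ‖u ξ‖) _ _ hu.norm
      · filter_upwards with y
        apply Tendsto.mul_const
        exact (tendsto_const_nhds.div hbt (hb0 0)).cexp
      · filter_upwards with ε using
          AEStronglyMeasurable.mul (Continuous.aestronglyMeasurable (by fun_prop)) hu.1
      · filter_upwards [self_mem_nhdsWithin] with ε (hε : 0 < ε)
        filter_upwards with y
        rw [norm_mul, Complex.norm_exp]
        apply mul_le_of_le_one_left (norm_nonneg _)
        rw [Real.exp_le_one_iff]
        have h2 : (-(π : ℂ) ^ 2 * (‖x - y‖ : ℂ) ^ 2 / b ε) =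
            ((-(π ^ 2 * ‖x - y‖ ^ 2) : ℝ) : ℂ) * (b ε)⁻¹ := by
          push_cast; ring
        rw [h2, Complex.re_ofReal_mul, Complex.inv_re, hbre]
        have h3 : 0 ≤ ε / Complex.normSq (b ε) := div_nonneg hε.le (Complex.normSq_nonneg _)
        have h4 : 0 ≤ π ^ 2 * ‖x - y‖ ^ 2 := by positivity
        nlinarith
  rw [← hbzero]
  refine tendsto_nhds_unique A (B.congr' ?_)
  filter_upwards [self_mem_nhdsWithin] with ε (hε : 0 < ε)
  have hre : 0 < (b ε).re := by rw [hbre]; exact hε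
  have J : Integrable (fun w : EuclideanSpace ℝ (Fin d) =>
      Complex.exp (-b ε * ‖w‖ ^ 2 + 2 * π * Complex.I * (⟪x, w⟫ : ℝ))) :=
    GaussianFourier.integrable_cexp_neg_mul_sq_norm_add hre _ _
  have K : ∫ w, 𝓕 (fun w : EuclideanSpace ℝ (Fin d) =>
      Complex.exp (-b ε * ‖w‖ ^ 2 + 2 * π * Complex.I * (⟪x, w⟫ : ℝ))) w • u w =
      ∫ w, Complex.exp (-b ε * ‖w‖ ^ 2 + 2 * π * Complex.I * (⟪x, w⟫ : ℝ)) • 𝓕 (⇑u) w := by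
    simpa using! (VectorFourier.integral_fourierIntegral_smul_eq_flip
      (L := innerₗ (EuclideanSpace ℝ (Fin d)))
      Real.continuous_fourierChar continuous_inner J hu)
  rw [← K, ← integral_const_mul]
  congr 1
  funext w
  rw [fourier_gaussian_innerProductSpace' hre, smul_eq_mul, finrank_euclideanSpace_fin, mul_assoc]

lemma twisted_eq (d : ℕ) (t : ℝ) (ht : t ≠ 0)
    (u : SchwartzMap (EuclideanSpace ℝ (Fin d)) ℂ) :
    Mt d t (schrodingerProp d (-t) u) = fun x =>
      ((π : ℂ) / (-(4 * (π : ℂ) ^ 2 * t) * Complex.I)) ^ ((d : ℂ) / 2) *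
        𝓕⁻ (chirp d (-(1 / (4 * t))) u) ((4 * π * t)⁻¹ • x) := by
  funext x
  have hπ : (π : ℂ) ≠ 0 := by exact_mod_cast Real.pi_pos.ne'
  have htc : (t : ℂ) ≠ 0 := by exact_mod_cast ht
  rw [Mt, schrodinger_kernel d t ht, SchwartzMap.fourierInv_coe, Real.fourierInv_eq']
  rw [mul_left_comm, ← integral_const_mul]
  congr 2
  funext y
  rw [chirp_apply, smul_eq_mul, ← mul_assoc, ← mul_assoc, ← Complex.exp_add, ← Complex.exp_add]
  congr 2
  have h : ‖x - y‖ ^ 2 = ‖x‖ ^ 2 - 2 * ⟪x, y⟫ + ‖y‖ ^ 2 := norm_sub_sq_real x y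
  have hc : (‖x - y‖ : ℂ) ^ 2 = (‖x‖ : ℂ) ^ 2 - 2 * (⟪x, y⟫ : ℝ) + (‖y‖ : ℂ) ^ 2 := by
    exact_mod_cast congrArg (fun r : ℝ => (r : ℂ)) h
  rw [hc, inner_smul_right, real_inner_comm]
  push_cast
  have hI := Complex.I_sq
  field_simp
  rw [hI]
  ring

lemma twisted_integrable (d : ℕ) (t : ℝ) (ht : t ≠ 0)
    (u : SchwartzMap (EuclideanSpace ℝ (Fin d)) ℂ) :
    Integrable (Mt d t (schrodingerProp d (-t) u)) := by
  rw [twisted_eq d t ht]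
  apply Integrable.const_mul
  have ha : (4 * π * t)⁻¹ ≠ 0 := by
    have := Real.pi_pos.ne'
    positivity
  exact (SchwartzMap.integrable (𝓕⁻ (chirp d (-(1 / (4 * t))) u))).comp_smul ha

lemma twisted_fourier (d : ℕ) (t : ℝ) (ht : t ≠ 0)
    (u : SchwartzMap (EuclideanSpace ℝ (Fin d)) ℂ) (η : EuclideanSpace ℝ (Fin d)) :
    𝓕 (Mt d t (schrodingerProp d (-t) u)) η =
      ((π : ℂ) / (-(4 * (π : ℂ) ^ 2 * t) * Complex.I)) ^ ((d : ℂ) / 2) *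
        (((|4 * π * t| ^ d : ℝ) : ℂ) * chirp d (-(1 / (4 * t))) u ((4 * π * t) • η)) := by
  have ha : (4 * π * t) ≠ 0 := by
    have := Real.pi_pos.ne'
    positivity
  rw [twisted_eq d t ht]
  set a := 4 * π * t
  set w := chirp d (-(1 / (4 * t))) u
  rw [Real.fourier_eq']
  have h1 := Measure.integral_comp_inv_smul (volume : Measure (EuclideanSpace ℝ (Fin d)))
    (fun x => Complex.exp ((↑(-2 * π * ⟪x, a • η⟫) : ℂ) * Complex.I) • (𝓕⁻ w) x) a
  have h2 : ∫ x, Complex.exp ((↑(-2 * π * ⟪x, a • η⟫) : ℂ) * Complex.I) • (𝓕⁻ w) x = w (a • η) := by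
    rw [← Real.fourier_eq', ← SchwartzMap.fourier_coe, FourierTransform.fourier_fourierInv_eq]
  rw [h2, finrank_euclideanSpace_fin, abs_pow, Complex.real_smul] at h1
  rw [← h1, ← integral_const_mul]
  congr 1
  funext x
  have h3 : ⟪a⁻¹ • x, a • η⟫ = ⟪x, η⟫ := by
    rw [inner_smul_left, inner_smul_right]
    simp
    field_simp
  rw [h3]
  simp only [smul_eq_mul]
  ring

lemma norm_twisted_fourier (d : ℕ) (t : ℝ) (ht : t ≠ 0)
    (u : SchwartzMap (EuclideanSpace ℝ (Fin d)) ℂ) (η : EuclideanSpace ℝ (Fin d)) :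
    ‖𝓕 (Mt d t (schrodingerProp d (-t) u)) η‖ =
      (4 * π * |t|) ^ ((d : ℝ) / 2) * ‖u ((4 * π * t) • η)‖ := by
  have hπ := Real.pi_pos
  have hA : 0 < 4 * π * |t| := by positivity
  rw [twisted_fourier d t ht, norm_mul, norm_mul, chirp_apply, norm_mul]
  have h0 : ‖Complex.exp (Complex.I * ((-(1 / (4 * t)) * ‖(4 * π * t) • η‖ ^ 2 : ℝ) : ℂ))‖ = 1 := by
    rw [mul_comm, Complex.norm_exp_ofReal_mul_I]
  rw [h0, one_mul, ← mul_assoc]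
  congr 1
  have hb : ((d : ℂ) / 2) = (((d : ℝ) / 2 : ℝ) : ℂ) := by push_cast; rfl
  have hne : (π : ℂ) / (-(4 * (π : ℂ) ^ 2 * t) * Complex.I) ≠ 0 := by
    have h1 : (π : ℂ) ≠ 0 := by exact_mod_cast hπ.ne'
    have h2 : (t : ℂ) ≠ 0 := by exact_mod_cast ht
    simp [h1, h2]
  rw [hb, Complex.norm_cpow_real]
  have h5 : ‖(π : ℂ) / (-(4 * (π : ℂ) ^ 2 * t) * Complex.I)‖ = (4 * π * |t|)⁻¹ := by
    simp [abs_of_pos hπ]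
    field_simp
  have h6 : ‖((|4 * π * t| ^ d : ℝ) : ℂ)‖ = (4 * π * |t|) ^ (d : ℝ) := by
    rw [Complex.norm_real, Real.norm_of_nonneg (by positivity), Real.rpow_natCast, abs_mul,
      abs_of_pos (by positivity : 0 < 4 * π)]
  rw [h5, h6, Real.inv_rpow hA.le, ← Real.rpow_neg hA.le, ← Real.rpow_add hA]
  congr 1
  ring

lemma twisted_eLpNorm (d : ℕ) (t : ℝ) (ht : t ≠ 0) (ρ : ℝ) (hρ : 0 < ρ)
    (u : SchwartzMap (EuclideanSpace ℝ (Fin d)) ℂ) :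
    eLpNorm (𝓕 (Mt d t (schrodingerProp d (-t) (⇑u)))) (ENNReal.ofReal (2 * ρ)) volume =
        ENNReal.ofReal ((4 * π * |t|) ^ ((1 - 1 / ρ) * (d : ℝ) / 2)) *
          eLpNorm (⇑u) (ENNReal.ofReal (2 * ρ)) volume := by
  have hπ := Real.pi_pos
  have hA : 0 < 4 * π * |t| := by positivity
  have ha : (4 * π * t) ≠ 0 := by positivity
  have e1 : eLpNorm (𝓕 (Mt d t (schrodingerProp d (-t) (⇑u)))) (ENNReal.ofReal (2 * ρ)) volume =
      eLpNorm (((4 * π * |t|) ^ ((d : ℝ) / 2)) • fun η => u ((4 * π * t) • η))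
        (ENNReal.ofReal (2 * ρ)) volume := by
    apply eLpNorm_congr_norm_ae
    filter_upwards with η
    rw [norm_twisted_fourier d t ht, Pi.smul_apply, norm_smul,
      Real.norm_of_nonneg (by positivity)]
  have e2 : eLpNorm (fun η => u ((4 * π * t) • η)) (ENNReal.ofReal (2 * ρ)) volume =
      eLpNorm (⇑u) (ENNReal.ofReal (2 * ρ))
        (Measure.map (fun η : EuclideanSpace ℝ (Fin d) => (4 * π * t) • η) volume) := by
    rw [eLpNorm_map_measure u.continuous.aestronglyMeasurable (by fun_prop)]
    rfl
  have hpos : 0 < |((4 * π * t) ^ d)⁻¹| := by positivity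
  rw [e1, eLpNorm_const_smul, e2, Measure.map_addHaar_smul _ ha, finrank_euclideanSpace_fin,
    eLpNorm_smul_measure_of_ne_zero (by simpa using hpos), smul_eq_mul, ← mul_assoc]
  congr 1
  have h7 : (1 / ENNReal.ofReal (2 * ρ)).toReal = 1 / (2 * ρ) := by
    rw [ENNReal.toReal_div, ENNReal.toReal_ofReal (by positivity)]; simp
  have h8 : |((4 * π * t) ^ d)⁻¹| = (4 * π * |t|) ^ (-(d : ℝ)) := by
    rw [abs_inv, abs_pow, abs_mul, abs_of_pos (by positivity : 0 < 4 * π), Real.rpow_neg hA.le,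
      Real.rpow_natCast]
  rw [h7, h8, ENNReal.ofReal_rpow_of_pos (by positivity), Real.enorm_of_nonneg (by positivity),
    ← ENNReal.ofReal_mul (by positivity), ← Real.rpow_mul hA.le, ← Real.rpow_add hA]
  congr 2
  field_simp
  ring

lemma fourier_reflect_conj (d : ℕ) (v : EuclideanSpace ℝ (Fin d) → ℂ)
    (η : EuclideanSpace ℝ (Fin d)) :
    𝓕 (fun x => (starRingEnd ℂ) (v (-x))) η = (starRingEnd ℂ) (𝓕 v η) := by
  rw [Real.fourier_eq', Real.fourier_eq', ← integral_conj, ← integral_neg_eq_self]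
  congr 1
  funext x
  simp only [smul_eq_mul, map_mul, ← Complex.exp_conj, neg_neg, Complex.conj_ofReal, Complex.conj_I,
    inner_neg_left]
  congr 2
  push_cast
  ring

/-- For `t ≠ 0` and `0 < ρ < ∞`:
`‖𝓕(M_t U(-t)u)‖_{L^{2ρ}} = (4π|t|)^{(1-1/ρ)d/2} ‖u‖_{L^{2ρ}}` for every Schwartz `u`,
and consequently, with `v_j = M_t U(-t)u_j` and `Ω = v₁ ∗ (R v̄₂)`,
`‖𝓕Ω‖_{L^ρ} ≤ (4π|t|)^{d(1-1/ρ)} ‖u₁‖_{L^{2ρ}} ‖u₂‖_{L^{2ρ}}`. -/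
theorem twisted_product_fourier_estimate (d : ℕ) (hd : 1 ≤ d) (t : ℝ) (ht : t ≠ 0)
    (ρ : ℝ) (hρ : 0 < ρ)
    (u₁ u₂ : SchwartzMap (EuclideanSpace ℝ (Fin d)) ℂ) :
    (∀ u : SchwartzMap (EuclideanSpace ℝ (Fin d)) ℂ,
      eLpNorm (𝓕 (Mt d t (schrodingerProp d (-t) (⇑u)))) (ENNReal.ofReal (2 * ρ)) volume =
        ENNReal.ofReal ((4 * π * |t|) ^ ((1 - 1 / ρ) * (d : ℝ) / 2)) *
          eLpNorm (⇑u) (ENNReal.ofReal (2 * ρ)) volume) ∧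
    eLpNorm
        (𝓕 (convC (Mt d t (schrodingerProp d (-t) (⇑u₁)))
          (fun x => (starRingEnd ℂ) (Mt d t (schrodingerProp d (-t) (⇑u₂)) (-x)))))
        (ENNReal.ofReal ρ) volume ≤
      ENNReal.ofReal ((4 * π * |t|) ^ ((d : ℝ) * (1 - 1 / ρ))) *
        eLpNorm (⇑u₁) (ENNReal.ofReal (2 * ρ)) volume *
        eLpNorm (⇑u₂) (ENNReal.ofReal (2 * ρ)) volume := by
  refine ⟨fun u => twisted_eLpNorm d t ht ρ hρ u, ?_⟩
  have hπ := Real.pi_pos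
  have hA : 0 < 4 * π * |t| := by positivity
  set v₁ := Mt d t (schrodingerProp d (-t) (⇑u₁)) with hv₁
  set v₂ := Mt d t (schrodingerProp d (-t) (⇑u₂)) with hv₂
  have i₁ : Integrable v₁ := twisted_integrable d t ht u₁
  have i₂ : Integrable v₂ := twisted_integrable d t ht u₂
  have i₃ : Integrable (fun x => (starRingEnd ℂ) (v₂ (-x))) := by
    have h := i₂.comp_neg
    exact (LinearIsometryEquiv.integrable_comp_iff Complex.conjLIE).2 h
  have hF : 𝓕 (convC v₁ (fun x => (starRingEnd ℂ) (v₂ (-x)))) =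
      fun η => 𝓕 v₁ η * (starRingEnd ℂ) (𝓕 v₂ η) := by
    funext η
    rw [← fourier_reflect_conj, ← Real.fourier_mul_convolution_eq i₁ i₃]
    rfl
  have c₁ : Continuous (𝓕 v₁) := by
    have : 𝓕 v₁ = _ := funext (twisted_fourier d t ht u₁)
    rw [this]
    fun_prop
  have c₂ : Continuous (𝓕 v₂) := by
    have : 𝓕 v₂ = _ := funext (twisted_fourier d t ht u₂)
    rw [this]
    fun_prop
  have hol : ENNReal.HolderTriple (ENNReal.ofReal (2 * ρ)) (ENNReal.ofReal (2 * ρ))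
      (ENNReal.ofReal ρ) := by
    constructor
    rw [← ENNReal.ofReal_inv_of_pos (by positivity), ← ENNReal.ofReal_inv_of_pos (by positivity),
      ← ENNReal.ofReal_add (by positivity) (by positivity)]
    congr 1
    field_simp
    norm_num
  rw [hF]
  have key := eLpNorm_le_eLpNorm_mul_eLpNorm'_of_norm (μ := volume)
    (p := ENNReal.ofReal (2 * ρ)) (q := ENNReal.ofReal (2 * ρ)) (r := ENNReal.ofReal ρ)
    c₁.aestronglyMeasurable c₂.aestronglyMeasurable
    (fun z w : ℂ => z * (starRingEnd ℂ) w) 1 (by filter_upwards with x; simp)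
  refine key.trans (le_of_eq ?_)
  rw [hv₁, hv₂, twisted_eLpNorm d t ht ρ hρ u₁, twisted_eLpNorm d t ht ρ hρ u₂]
  have : ENNReal.ofReal ((4 * π * |t|) ^ ((d : ℝ) * (1 - 1 / ρ))) =
      ENNReal.ofReal ((4 * π * |t|) ^ ((1 - 1 / ρ) * (d : ℝ) / 2)) *
      ENNReal.ofReal ((4 * π * |t|) ^ ((1 - 1 / ρ) * (d : ℝ) / 2)) := by
    rw [← ENNReal.ofReal_mul (by positivity), ← Real.rpow_add hA]
    congr 2
    ring
  rw [this, ENNReal.coe_one]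
  ring
end

section
/- Let 4/3 < p ≤ 2 and let p′ be the conjugate exponent (1/p + 1/p′ = 1). There is a constant C depending only on p such that for every Schwartz function φ on ℝ, (∫_ℝ ∫_ℝ |[U(t)φ](x)|^{3p} dx dt)^{1/(3p)} ≤ C ‖Fφ‖_{L^{p′}(ℝ)}, where [U(t)φ](x) = ∫_ℝ e^{−4π² i t ξ²} (Fφ)(ξ) e^{2πi x ξ} dξ is the one-dimensional free Schrödinger propagator. -/
open MeasureTheory Real FourierTransform
open scoped ENNReal

/-- The one-dimensional free Schrödinger propagator
`[U(t)φ](x) = ∫ e^{-4π²itξ²} (𝓕φ)(ξ) e^{2πixξ} dξ`. -/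
noncomputable def schrod1 (t : ℝ) (φ : ℝ → ℂ) : ℝ → ℂ :=
  fun x => ∫ ξ : ℝ,
    Complex.exp (-(4 * (π : ℂ) ^ 2 * (t : ℂ) * (ξ : ℂ) ^ 2) * Complex.I) *
      𝓕 φ ξ * Complex.exp (2 * (π : ℂ) * Complex.I * (x : ℂ) * (ξ : ℂ))


/-- Oscillatory integral with linear phase in `z` and phase functions `a`, `b`. -/
noncomputable def oscInt {Y : Type*} [MeasurableSpace Y] (μ : Measure Y) (a b : Y → ℝ)
    (H : Y → ℂ) (z : ℝ × ℝ) : ℂ :=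
  ∫ y, Complex.exp (((z.1 * a y + z.2 * b y : ℝ) : ℂ) * Complex.I) * H y ∂μ

lemma oscInt_aux_int {Y : Type*} [MeasurableSpace Y] {μ : Measure Y} {a b : Y → ℝ}
    (ha : Measurable a) (hb : Measurable b) {H : Y → ℂ} (hH : Integrable H μ) (z : ℝ × ℝ) :
    Integrable (fun y => Complex.exp (((z.1 * a y + z.2 * b y : ℝ) : ℂ) * Complex.I) * H y) μ := by
  refine hH.bdd_mul (c := 1) ?_ ?_
  · exact Measurable.aestronglyMeasurable (by fun_prop)
  · exact Filter.Eventually.of_forall fun y => (Complex.norm_exp_ofReal_mul_I _).le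

lemma oscInt_norm_le {Y : Type*} [MeasurableSpace Y] (μ : Measure Y) (a b : Y → ℝ)
    (H : Y → ℂ) (z : ℝ × ℝ) : ‖oscInt μ a b H z‖ₑ ≤ ∫⁻ y, ‖H y‖ₑ ∂μ := by
  unfold oscInt
  refine (enorm_integral_le_lintegral_enorm _).trans (le_of_eq ?_)
  refine lintegral_congr fun y => ?_
  rw [enorm_mul, ← ofReal_norm, Complex.norm_exp_ofReal_mul_I]; simp

lemma oscInt_continuous {Y : Type*} [MeasurableSpace Y] {μ : Measure Y} {a b : Y → ℝ}
    (ha : Measurable a) (hb : Measurable b) {H : Y → ℂ} (hH : Integrable H μ) :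
    Continuous (oscInt μ a b H) := by
  unfold oscInt
  refine continuous_of_dominated (bound := fun y => ‖H y‖)
    (fun z => (oscInt_aux_int ha hb hH z).aestronglyMeasurable) ?_ hH.norm ?_
  · intro z
    refine Filter.Eventually.of_forall fun y => ?_
    rw [norm_mul, Complex.norm_exp_ofReal_mul_I, one_mul]
  · exact Filter.Eventually.of_forall fun y => by fun_prop

lemma gauss_fourier_1d (ε : ℝ) (hε : 0 < ε) (s : ℝ) :
    ∃ c : ℂ, ‖c‖ = √(π / ε) ∧
    ∫ x : ℝ, Complex.exp (((x * s : ℝ) : ℂ) * Complex.I) * Complex.exp (-(ε : ℂ) * (x : ℂ) ^ 2)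
     = c * ((rexp (-(4 * ε)⁻¹ * s ^ 2) : ℝ) : ℂ) := by
  refine ⟨(↑π / (ε : ℂ)) ^ (1 / 2 : ℂ), ?_, ?_⟩
  · have : (↑π / (ε : ℂ)) = ((π / ε : ℝ) : ℂ) := by push_cast; rfl
    rw [this, Complex.norm_cpow_eq_rpow_re_of_pos (by positivity), Real.sqrt_eq_rpow]
    norm_num
  · have h := fourierIntegral_gaussian (b := (ε : ℂ)) (by simpa using hε) (s : ℂ)
    have e : (fun x : ℝ => Complex.exp (((x * s : ℝ) : ℂ) * Complex.I)
        * Complex.exp (-(ε : ℂ) * (x : ℂ) ^ 2)) = fun x : ℝ =>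
        Complex.exp (Complex.I * s * x) * Complex.exp (-(ε : ℂ) * (x : ℂ) ^ 2) := by
      funext x; congr 2; push_cast; ring
    rw [e, h]
    congr 1
    push_cast
    congr 1
    have : (ε : ℂ) ≠ 0 := by exact_mod_cast hε.ne'
    field_simp

lemma gauss_fourier_2d (ε : ℝ) (hε : 0 < ε) (s s' : ℝ) :
    ‖∫ z : ℝ × ℝ, Complex.exp (((z.1 * s + z.2 * s' : ℝ) : ℂ) * Complex.I) *
      ((rexp (-ε * z.1 ^ 2) * rexp (-ε * z.2 ^ 2) : ℝ) : ℂ)‖ₑ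
     = ENNReal.ofReal (π / ε) * (ENNReal.ofReal (rexp (-(4 * ε)⁻¹ * s ^ 2)) *
        ENNReal.ofReal (rexp (-(4 * ε)⁻¹ * s' ^ 2))) := by
  obtain ⟨c, hc, h1⟩ := gauss_fourier_1d ε hε s
  obtain ⟨c', hc', h2⟩ := gauss_fourier_1d ε hε s'
  have e : (fun z : ℝ × ℝ => Complex.exp (((z.1 * s + z.2 * s' : ℝ) : ℂ) * Complex.I) *
      ((rexp (-ε * z.1 ^ 2) * rexp (-ε * z.2 ^ 2) : ℝ) : ℂ)) = fun z =>
      (Complex.exp (((z.1 * s : ℝ) : ℂ) * Complex.I) * Complex.exp (-(ε : ℂ) * (z.1 : ℂ) ^ 2)) *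
      (Complex.exp (((z.2 * s' : ℝ) : ℂ) * Complex.I) * Complex.exp (-(ε : ℂ) * (z.2 : ℂ) ^ 2)) := by
    funext z
    push_cast
    rw [add_mul, Complex.exp_add]; ring
  rw [e, Measure.volume_eq_prod, integral_prod_mul
    (fun x : ℝ => Complex.exp (((x * s : ℝ) : ℂ) * Complex.I) * Complex.exp (-(ε : ℂ) * (x : ℂ) ^ 2))
    (fun x : ℝ => Complex.exp (((x * s' : ℝ) : ℂ) * Complex.I) * Complex.exp (-(ε : ℂ) * (x : ℂ) ^ 2)), h1, h2, ← ofReal_norm, ← ENNReal.ofReal_mul (by positivity),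
    ← ENNReal.ofReal_mul (by positivity)]
  congr 1
  rw [norm_mul, norm_mul, norm_mul, hc, hc', Complex.norm_of_nonneg (by positivity),
    Complex.norm_of_nonneg (by positivity)]
  have := Real.mul_self_sqrt (show 0 ≤ π / ε by positivity)
  linear_combination (rexp (-(4 * ε)⁻¹ * s ^ 2) * rexp (-(4 * ε)⁻¹ * s' ^ 2)) * this

lemma gauss_lint (β : ℝ) (hβ : 0 < β) (s : ℝ) :
    ∫⁻ x : ℝ, ENNReal.ofReal (rexp (-β * (s - x) ^ 2)) = ENNReal.ofReal √(π / β) := by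
  rw [lintegral_sub_left_eq_self (fun x => ENNReal.ofReal (rexp (-β * x ^ 2))) s,
    ← ofReal_integral_eq_lintegral_ofReal (integrable_exp_neg_mul_sq hβ)
      (Filter.Eventually.of_forall fun x => by positivity), integral_gaussian]

lemma oscInt_L2_weighted {Y : Type*} [MeasurableSpace Y] {μ : Measure Y} [SFinite μ] {a b : Y → ℝ}
    (ha : Measurable a) (hb : Measurable b) {H : Y → ℂ} (hHm : Measurable H) (hH : Integrable H μ)
    {K : ℝ≥0∞}
    (hK : ∀ g : ℝ × ℝ → ℝ≥0∞, Measurable g → ∫⁻ y, g (a y, b y) ∂μ ≤ K * ∫⁻ z, g z)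
    (ε : ℝ) (hε : 0 < ε) :
    ∫⁻ z, ‖oscInt μ a b H z‖ₑ ^ 2 * ENNReal.ofReal (rexp (-ε * z.1 ^ 2) * rexp (-ε * z.2 ^ 2)) ≤
      (K * ENNReal.ofReal (4 * π ^ 2)) * ∫⁻ y, ‖H y‖ₑ ^ 2 ∂μ := by
  set w : ℝ × ℝ → ℝ := fun z => rexp (-ε * z.1 ^ 2) * rexp (-ε * z.2 ^ 2) with hw
  have hwi : Integrable w := by
    rw [Measure.volume_eq_prod]
    exact Integrable.mul_prod (integrable_exp_neg_mul_sq hε) (integrable_exp_neg_mul_sq hε)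
  have hw0 : ∀ z, 0 ≤ w z := fun z => by positivity
  set B := oscInt μ a b H with hB
  have hBc : Continuous B := oscInt_continuous ha hb hH
  have hBb : ∀ z, ‖B z‖ ≤ ∫ y, ‖H y‖ ∂μ := by
    intro z
    refine (norm_integral_le_integral_norm _).trans (le_of_eq ?_)
    refine integral_congr_ae (Filter.Eventually.of_forall fun y => ?_)
    simp only [norm_mul, Complex.norm_exp_ofReal_mul_I, one_mul]
  have hInteg : Integrable (fun z => ‖B z‖ ^ 2 * w z) := by
    refine hwi.bdd_mul (c := (∫ y, ‖H y‖ ∂μ) ^ 2) (by fun_prop) ?_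
    refine Filter.Eventually.of_forall fun z => ?_
    rw [norm_pow, norm_norm]
    gcongr
    exact hBb z
  have s1 : ∫⁻ z, ‖B z‖ₑ ^ 2 * ENNReal.ofReal (w z) = ‖∫ z, ((‖B z‖ ^ 2 * w z : ℝ) : ℂ)‖ₑ := by
    rw [integral_complex_ofReal, ← ofReal_norm, Complex.norm_of_nonneg (integral_nonneg fun z => by
        have := hw0 z; positivity),
      ofReal_integral_eq_lintegral_ofReal hInteg (Filter.Eventually.of_forall fun z => by
        have := hw0 z; positivity)]
    refine lintegral_congr fun z => ?_
    rw [ENNReal.ofReal_mul (p := ‖B z‖ ^ 2) (by positivity), ENNReal.ofReal_pow (by positivity), ofReal_norm]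
  set F : (ℝ × ℝ) → (Y × Y) → ℂ := fun z q =>
    (Complex.exp (((z.1 * (a q.1 - a q.2) + z.2 * (b q.1 - b q.2) : ℝ) : ℂ) * Complex.I) * ((w z : ℝ) : ℂ))
      * (H q.1 * (starRingEnd ℂ) (H q.2)) with hF
  have s2 : ∀ z, ((‖B z‖ ^ 2 * w z : ℝ) : ℂ) = ∫ q, F z q ∂(μ.prod μ) := by
    intro z
    have e1 : ((‖B z‖ ^ 2 : ℝ) : ℂ) = B z * (starRingEnd ℂ) (B z) := by
      rw [Complex.mul_conj, Complex.normSq_eq_norm_sq]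
    have e2 : B z * (starRingEnd ℂ) (B z) = ∫ q : Y × Y,
      (Complex.exp (((z.1 * a q.1 + z.2 * b q.1 : ℝ) : ℂ) * Complex.I) * H q.1) *
      ((starRingEnd ℂ) (Complex.exp (((z.1 * a q.2 + z.2 * b q.2 : ℝ) : ℂ) * Complex.I) * H q.2)) ∂(μ.prod μ) := by
      rw [integral_prod_mul (μ := μ) (ν := μ) (fun y => Complex.exp (((z.1 * a y + z.2 * b y : ℝ) : ℂ) * Complex.I) * H y)
       (fun y => (starRingEnd ℂ) (Complex.exp (((z.1 * a y + z.2 * b y : ℝ) : ℂ) * Complex.I) * H y)), integral_conj]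
      rfl
    rw [Complex.ofReal_mul, e1, e2, ← integral_mul_const]
    congr 1
    funext q
    simp only [hF]
    rw [map_mul, ← Complex.exp_conj, map_mul, Complex.conj_I, Complex.conj_ofReal]
    have : ((z.1 * (a q.1 - a q.2) + z.2 * (b q.1 - b q.2) : ℝ) : ℂ) * Complex.I =
      ((z.1 * a q.1 + z.2 * b q.1 : ℝ) : ℂ) * Complex.I + ((z.1 * a q.2 + z.2 * b q.2 : ℝ) : ℂ) * -Complex.I := by
      push_cast; ring
    rw [this, Complex.exp_add]
    ring
  have hFi : Integrable (Function.uncurry F) ((volume : Measure (ℝ × ℝ)).prod (μ.prod μ)) := by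
    have hc : Integrable (fun y => (starRingEnd ℂ) (H y)) μ := by
      refine hH.mono (Measurable.aestronglyMeasurable (by fun_prop)) (Filter.Eventually.of_forall fun y => by simp)
    have h1 := (hwi.ofReal (𝕜 := ℂ)).mul_prod (hH.mul_prod hc)
    have h2 := h1.bdd_mul (c := 1) (f := fun v : (ℝ × ℝ) × (Y × Y) =>
      Complex.exp (((v.1.1 * (a v.2.1 - a v.2.2) + v.1.2 * (b v.2.1 - b v.2.2) : ℝ) : ℂ) * Complex.I))
      (Measurable.aestronglyMeasurable (by fun_prop))
      (Filter.Eventually.of_forall fun y => (Complex.norm_exp_ofReal_mul_I _).le)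
    refine h2.congr (Filter.Eventually.of_forall fun v => ?_)
    simp only [hF, Function.uncurry, mul_assoc]
    rfl
  rw [s1]
  simp_rw [s2]
  rw [integral_integral_swap hFi]
  set k : Y → Y → ℝ≥0∞ := fun y y' => ENNReal.ofReal (π / ε) *
    (ENNReal.ofReal (rexp (-(4 * ε)⁻¹ * (a y - a y') ^ 2)) *
        ENNReal.ofReal (rexp (-(4 * ε)⁻¹ * (b y - b y') ^ 2))) with hk
  have hkm : Measurable (Function.uncurry k) := by
    simp only [hk]; unfold Function.uncurry; fun_prop
  have hsymm : ∀ y y', k y y' = k y' y := by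
    intro y y'
    simp only [hk]
    rw [← neg_sub (a y'), ← neg_sub (b y'), neg_sq, neg_sq]
  have s3 : ∀ q : Y × Y, ‖∫ z, F z q‖ₑ = k q.1 q.2 * (‖H q.1‖ₑ * ‖H q.2‖ₑ) := by
    intro q
    simp only [hF]
    rw [integral_mul_const, enorm_mul, enorm_mul]
    simp only [hw]
    rw [gauss_fourier_2d ε hε]
    congr 2
    rw [← ofReal_norm, ← ofReal_norm, RCLike.norm_conj]
  have hkint : ∀ y, ∫⁻ y', k y y' ∂μ ≤ K * ENNReal.ofReal (4 * π ^ 2) := by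
    intro y
    simp only [hk]
    refine (hK (fun v => ENNReal.ofReal (π / ε) *
    (ENNReal.ofReal (rexp (-(4 * ε)⁻¹ * (a y - v.1) ^ 2)) *
        ENNReal.ofReal (rexp (-(4 * ε)⁻¹ * (b y - v.2) ^ 2)))) (by fun_prop)).trans (le_of_eq ?_)
    congr 1
    rw [lintegral_const_mul _ (by fun_prop), Measure.volume_eq_prod,
      lintegral_prod_mul (f := fun v => ENNReal.ofReal (rexp (-(4 * ε)⁻¹ * (a y - v) ^ 2)))
       (g := fun v => ENNReal.ofReal (rexp (-(4 * ε)⁻¹ * (b y - v) ^ 2))) (by fun_prop) (by fun_prop),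
      gauss_lint _ (by positivity), gauss_lint _ (by positivity), ← ENNReal.ofReal_mul (by positivity),
      ← ENNReal.ofReal_mul (by positivity), Real.mul_self_sqrt (by positivity)]
    congr 1
    field_simp
  have hHe : Measurable fun y => ‖H y‖ₑ := hHm.enorm
  have amgm : ∀ x y : ℝ≥0∞, x * y ≤ 2⁻¹ * (x ^ 2 + y ^ 2) := by
    intro x y
    have : 2 * (x * y) ≤ x ^ 2 + y ^ 2 := by
      rcases eq_or_ne x ⊤ with rfl | hx
      · simp
      rcases eq_or_ne y ⊤ with rfl | hy
      · simp
      lift x to NNReal using hx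
      lift y to NNReal using hy
      norm_cast
      rw [← mul_assoc]
      exact two_mul_le_add_sq x y
    calc x * y = 2⁻¹ * (2 * (x * y)) := by
          rw [← mul_assoc, ENNReal.inv_mul_cancel (by norm_num) (by norm_num), one_mul]
      _ ≤ _ := by gcongr
  have hsch : ∫⁻ y, ∫⁻ y', k y y' * ‖H y‖ₑ ^ 2 ∂μ ∂μ ≤
      (K * ENNReal.ofReal (4 * π ^ 2)) * ∫⁻ y, ‖H y‖ₑ ^ 2 ∂μ := by
    rw [← lintegral_const_mul _ (by fun_prop)]
    refine lintegral_mono fun y => ?_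
    simp only
    rw [lintegral_mul_const _ (by fun_prop)]
    gcongr
    exact hkint y
  calc ‖∫ q, ∫ z, F z q ∂(volume : Measure (ℝ × ℝ)) ∂(μ.prod μ)‖ₑ 
      ≤ ∫⁻ q, ‖∫ z, F z q‖ₑ ∂(μ.prod μ) := enorm_integral_le_lintegral_enorm _
    _ = ∫⁻ q, k q.1 q.2 * (‖H q.1‖ₑ * ‖H q.2‖ₑ) ∂(μ.prod μ) := lintegral_congr s3
    _ ≤ ∫⁻ q, 2⁻¹ * (k q.1 q.2 * ‖H q.1‖ₑ ^ 2 + k q.1 q.2 * ‖H q.2‖ₑ ^ 2) ∂(μ.prod μ) := by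
        refine lintegral_mono fun q => ?_
        simp only
        rw [← mul_add, mul_left_comm 2⁻¹]
        exact mul_le_mul_right (amgm _ _) _
    _ = 2⁻¹ * (∫⁻ q, k q.1 q.2 * ‖H q.1‖ₑ ^ 2 ∂(μ.prod μ)
          + ∫⁻ q, k q.1 q.2 * ‖H q.2‖ₑ ^ 2 ∂(μ.prod μ)) := by
        have hk' : Measurable fun q : Y × Y => k q.1 q.2 := hkm
        rw [lintegral_const_mul _ (by fun_prop), lintegral_add_left (by fun_prop)]
    _ ≤ 2⁻¹ * ((K * ENNReal.ofReal (4 * π ^ 2)) * ∫⁻ y, ‖H y‖ₑ ^ 2 ∂μ +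
          (K * ENNReal.ofReal (4 * π ^ 2)) * ∫⁻ y, ‖H y‖ₑ ^ 2 ∂μ) := by
        have hk' : Measurable fun q : Y × Y => k q.1 q.2 := hkm
        gcongr
        · rw [lintegral_prod _ (by fun_prop)]
          exact hsch
        · rw [lintegral_prod_symm _ (by fun_prop)]
          simp_rw [hsymm _]
          refine le_trans (le_of_eq ?_) hsch
          refine lintegral_congr fun y => lintegral_congr fun y' => ?_
          rw [hsymm]
    _ = _ := by
        rw [← two_mul, ← mul_assoc, ENNReal.inv_mul_cancel (by norm_num) (by norm_num), one_mul]

lemma oscInt_L2 {Y : Type*} [MeasurableSpace Y] {μ : Measure Y} [SFinite μ] {a b : Y → ℝ}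
    (ha : Measurable a) (hb : Measurable b) {H : Y → ℂ} (hHm : Measurable H) (hH : Integrable H μ)
    {K : ℝ≥0∞}
    (hK : ∀ g : ℝ × ℝ → ℝ≥0∞, Measurable g → ∫⁻ y, g (a y, b y) ∂μ ≤ K * ∫⁻ z, g z) :
    ∫⁻ z, ‖oscInt μ a b H z‖ₑ ^ 2 ≤
      (K * ENNReal.ofReal (4 * π ^ 2)) * ∫⁻ y, ‖H y‖ₑ ^ 2 ∂μ := by
  have hBc : Continuous (oscInt μ a b H) := oscInt_continuous ha hb hH
  have hBm : Measurable fun z => ‖oscInt μ a b H z‖ₑ := hBc.measurable.enorm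
  refine le_of_tendsto' (lintegral_tendsto_of_tendsto_of_monotone (μ := volume)
    (f := fun n : ℕ => fun z : ℝ × ℝ => ‖oscInt μ a b H z‖ₑ ^ 2 *
      ENNReal.ofReal (rexp (-(1 / ((n : ℝ) + 1)) * z.1 ^ 2) * rexp (-(1 / ((n : ℝ) + 1)) * z.2 ^ 2)))
    (F := fun z => ‖oscInt μ a b H z‖ₑ ^ 2) ?_ ?_ ?_)
    (fun n => oscInt_L2_weighted ha hb hHm hH hK (1 / ((n : ℝ) + 1)) (by positivity))
  · intro n
    exact Measurable.aemeasurable (by fun_prop)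
  · refine Filter.Eventually.of_forall fun z n m hnm => ?_
    simp only
    have : (n : ℝ) ≤ m := by exact_mod_cast hnm
    have h := one_div_le_one_div_of_le (by positivity : (0 : ℝ) < n + 1) (by linarith : (n : ℝ) + 1 ≤ m + 1)
    gcongr
  · refine Filter.Eventually.of_forall fun z => ?_
    have h0 : Filter.Tendsto (fun n : ℕ => 1 / ((n : ℝ) + 1)) Filter.atTop (nhds 0) :=
      tendsto_one_div_add_atTop_nhds_zero_nat
    have hcont : Continuous fun e : ℝ => ENNReal.ofReal (rexp (-e * z.1 ^ 2) * rexp (-e * z.2 ^ 2)) :=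
      ENNReal.continuous_ofReal.comp (by fun_prop)
    have h1 := (hcont.tendsto 0).comp h0
    simp only [neg_zero, zero_mul, Real.exp_zero, mul_one, ENNReal.ofReal_one] at h1
    have h2 := ENNReal.Tendsto.const_mul (a := ‖oscInt μ a b H z‖ₑ ^ 2) h1 (Or.inl one_ne_zero)
    simpa [Function.comp_def] using h2

lemma lint_rpow_Ioc (A e : ℝ) (hA : 0 < A) (he : -1 < e) :
    ∫⁻ x in Set.Ioc 0 A, ENNReal.ofReal (x ^ e) = ENNReal.ofReal (A ^ (e + 1) / (e + 1)) := by
  have hi : IntervalIntegrable (fun x : ℝ => x ^ e) volume 0 A :=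
    intervalIntegral.intervalIntegrable_rpow' he
  rw [← ofReal_integral_eq_lintegral_ofReal
    ((intervalIntegrable_iff_integrableOn_Ioc_of_le hA.le).1 hi),
    ← intervalIntegral.integral_of_le hA.le, integral_rpow (Or.inl he),
    Real.zero_rpow (by linarith), sub_zero]
  refine (ae_restrict_iff' measurableSet_Ioc).2 (Filter.Eventually.of_forall fun x hx => ?_)
  exact Real.rpow_nonneg hx.1.le _

lemma enorm_rpow_ofReal (z : ℂ) (s : ℝ) (hs : 0 ≤ s) : ‖z‖ₑ ^ s = ENNReal.ofReal (‖z‖ ^ s) := by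
  rw [← ofReal_norm, ENNReal.ofReal_rpow_of_nonneg (norm_nonneg _) hs]

lemma oscInt_level {Y : Type*} [MeasurableSpace Y] {μ : Measure Y} [SFinite μ] {a b : Y → ℝ}
    (ha : Measurable a) (hb : Measurable b) {H : Y → ℂ} (hHm : Measurable H) (hH : Integrable H μ)
    {K : ℝ≥0∞}
    (hK : ∀ g : ℝ × ℝ → ℝ≥0∞, Measurable g → ∫⁻ y, g (a y, b y) ∂μ ≤ K * ∫⁻ z, g z)
    (r : ℝ) (hr1 : 1 < r) (n : ℝ) (hn : 0 < n)
    (hN : ∫⁻ y, ‖H y‖ₑ ^ r ∂μ = ENNReal.ofReal n) (α : ℝ) (hα : 0 < α) :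
    volume {z | α < ‖oscInt μ a b H z‖} ≤
      (K * ENNReal.ofReal (4 * π ^ 2)) *
        (∫⁻ y, (if ‖H y‖ ^ (r - 1) * α ≤ 2 * n then ‖H y‖ₑ ^ 2 else 0) ∂μ) *
        (ENNReal.ofReal ((α / 2) ^ 2))⁻¹ := by
  set T : Set Y := {y | ‖H y‖ ^ (r - 1) * α ≤ 2 * n} with hT
  have hTm : MeasurableSet T := by
    refine measurableSet_le ?_ measurable_const
    fun_prop
  have hH1 : Integrable (Tᶜ.indicator H) μ := hH.indicator hTm.compl
  have hH2 : Integrable (T.indicator H) μ := hH.indicator hTm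
  have hH2m : Measurable (T.indicator H) := hHm.indicator hTm
  have hsum : ∀ z, oscInt μ a b H z = oscInt μ a b (T.indicator H) z + oscInt μ a b (Tᶜ.indicator H) z := by
    intro z
    unfold oscInt
    rw [← integral_add (oscInt_aux_int ha hb hH2 z) (oscInt_aux_int ha hb hH1 z)]
    congr 1
    funext y
    rw [← mul_add]
    congr 1
    exact (congrFun (Set.indicator_self_add_compl T H) y).symm
  have h1 : ∫⁻ y, ‖Tᶜ.indicator H y‖ₑ ∂μ ≤ ENNReal.ofReal (α / 2) := by
    calc ∫⁻ y, ‖Tᶜ.indicator H y‖ₑ ∂μ ≤ ∫⁻ y, ENNReal.ofReal (α / (2 * n)) * ‖H y‖ₑ ^ r ∂μ := by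
          refine lintegral_mono fun y => ?_
          by_cases hy : y ∈ T
          · simp [hy]
          · rw [Set.indicator_of_mem (by exact hy), enorm_rpow_ofReal _ _ (by linarith), ← ofReal_norm,
              ← ENNReal.ofReal_mul (by positivity)]
            apply ENNReal.ofReal_le_ofReal
            have hy' : 2 * n < ‖H y‖ ^ (r - 1) * α := by
              simpa [hT] using hy
            have hpos : 0 < ‖H y‖ := by
              rcases (norm_nonneg (H y)).eq_or_lt with h | h
              · rw [← h, Real.zero_rpow (by linarith)] at hy'
                linarith
              · exact h
            have e : ‖H y‖ ^ r = ‖H y‖ * ‖H y‖ ^ (r - 1) := by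
              rw [← Real.rpow_one_add' (norm_nonneg _) (by linarith)]
              congr 1; ring
            rw [e, div_mul_eq_mul_div, le_div_iff₀ (by positivity)]
            nlinarith
      _ = ENNReal.ofReal (α / 2) := by
          rw [lintegral_const_mul _ (by fun_prop), hN, ← ENNReal.ofReal_mul (by positivity)]
          congr 1
          field_simp
  have hsub : {z | α < ‖oscInt μ a b H z‖} ⊆
      {z | ENNReal.ofReal ((α / 2) ^ 2) ≤ ‖oscInt μ a b (T.indicator H) z‖ₑ ^ 2} := by
    intro z hz
    simp only [Set.mem_ofPred_eq] at hz ⊢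
    have h2 := (oscInt_norm_le μ a b (Tᶜ.indicator H) z).trans h1
    rw [← ofReal_norm, ENNReal.ofReal_le_ofReal_iff (by positivity)] at h2
    rw [hsum] at hz
    have h3 := norm_add_le (oscInt μ a b (T.indicator H) z) (oscInt μ a b (Tᶜ.indicator H) z)
    rw [← ofReal_norm, ← ENNReal.ofReal_pow (norm_nonneg _)]
    apply ENNReal.ofReal_le_ofReal
    gcongr
    linarith
  have hc := oscInt_continuous ha hb hH2
  have hm : Measurable fun z => ‖oscInt μ a b (T.indicator H) z‖ₑ ^ 2 := by
    have := hc.measurable.enorm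
    fun_prop
  refine (measure_mono hsub).trans ?_
  refine (meas_ge_le_lintegral_div hm.aemeasurable (by simp; positivity) (by simp)).trans ?_
  rw [div_eq_mul_inv]
  gcongr
  refine (oscInt_L2 ha hb hH2m hH2 hK).trans (le_of_eq ?_)
  congr 1
  refine lintegral_congr fun y => ?_
  by_cases hy : y ∈ T
  · rw [Set.indicator_of_mem hy, if_pos (by simpa [hT] using hy)]
  · rw [Set.indicator_of_notMem hy, if_neg (by simpa [hT] using hy)]; simp

lemma oscInt_HY {Y : Type*} [MeasurableSpace Y] {μ : Measure Y} [SFinite μ] {a b : Y → ℝ}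
    (ha : Measurable a) (hb : Measurable b) {H : Y → ℂ} (hHm : Measurable H) (hH : Integrable H μ)
    {K : ℝ≥0∞}
    (hK : ∀ g : ℝ × ℝ → ℝ≥0∞, Measurable g → ∫⁻ y, g (a y, b y) ∂μ ≤ K * ∫⁻ z, g z)
    (r q : ℝ) (hr1 : 1 < r) (hr2 : r < 2) (hq : q = r / (r - 1))
    (hN : ∫⁻ y, ‖H y‖ₑ ^ r ∂μ ≠ ⊤) :
    ∫⁻ z, ‖oscInt μ a b H z‖ₑ ^ q ≤
      (ENNReal.ofReal q * (K * ENNReal.ofReal (4 * π ^ 2)) * ENNReal.ofReal (4 * 2 ^ (q - 2) / (q - 2))) *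
        (∫⁻ y, ‖H y‖ₑ ^ r ∂μ) ^ (q - 1) := by
  have hr0 : 0 < r - 1 := by linarith
  have hq2 : 2 < q := by
    rw [hq, lt_div_iff₀ hr0]; linarith
  have hqr : q * (r - 1) = r := by rw [hq]; field_simp
  set N := ∫⁻ y, ‖H y‖ₑ ^ r ∂μ with hNdef
  have hBc : Continuous (oscInt μ a b H) := oscInt_continuous ha hb hH
  rcases eq_or_ne N 0 with h0 | h0
  · have hz : ∀ z, ‖oscInt μ a b H z‖ₑ = 0 := by
      intro z
      refine le_antisymm ((oscInt_norm_le μ a b H z).trans (le_of_eq ?_)) zero_le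
      rw [lintegral_eq_zero_iff (by fun_prop)]
      have := (lintegral_eq_zero_iff (by fun_prop)).1 h0
      filter_upwards [this] with y hy
      simpa [show ¬ r < 0 by linarith, show 0 < r by linarith] using hy
    simp_rw [hz]
    rw [ENNReal.zero_rpow_of_pos (by linarith)]
    simp
  set n := N.toReal with hn
  have hnpos : 0 < n := ENNReal.toReal_pos h0 hN
  have hNn : N = ENNReal.ofReal n := (ENNReal.ofReal_toReal hN).symm
  set K' := K * ENNReal.ofReal (4 * π ^ 2) with hK'
  have s1 : ∫⁻ z, ‖oscInt μ a b H z‖ₑ ^ q = ENNReal.ofReal q *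
      ∫⁻ t in Set.Ioi 0, volume {z | t < ‖oscInt μ a b H z‖} * ENNReal.ofReal (t ^ (q - 1)) := by
    rw [← lintegral_rpow_eq_lintegral_meas_lt_mul volume
      (Filter.Eventually.of_forall fun z => norm_nonneg _) hBc.norm.measurable.aemeasurable (by linarith)]
    exact lintegral_congr fun z => enorm_rpow_ofReal _ _ (by linarith)
  set G : ℝ → Y → ℝ≥0∞ := fun t y =>
    (if ‖H y‖ ^ (r - 1) * t ≤ 2 * n then ‖H y‖ₑ ^ 2 else 0) * ENNReal.ofReal (4 * t ^ (q - 3)) with hG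
  have hGm : Measurable (Function.uncurry G) := by
    simp only [hG]
    unfold Function.uncurry
    refine Measurable.mul (Measurable.ite ?_ (by fun_prop) measurable_const) (by fun_prop)
    refine measurableSet_le ?_ measurable_const
    fun_prop
  have s2 : ∀ t ∈ Set.Ioi (0 : ℝ), volume {z | t < ‖oscInt μ a b H z‖} * ENNReal.ofReal (t ^ (q - 1)) ≤
      K' * ∫⁻ y, G t y ∂μ := by
    intro t ht
    have ht : 0 < t := ht
    have hTm : MeasurableSet {y | ‖H y‖ ^ (r - 1) * t ≤ 2 * n} := by
      refine measurableSet_le ?_ measurable_const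
      fun_prop
    simp only [hG]
    rw [lintegral_mul_const _ (Measurable.ite hTm (by fun_prop) measurable_const)]
    calc _ ≤ (K' * (∫⁻ y, (if ‖H y‖ ^ (r - 1) * t ≤ 2 * n then ‖H y‖ₑ ^ 2 else 0) ∂μ) *
        (ENNReal.ofReal ((t / 2) ^ 2))⁻¹) * ENNReal.ofReal (t ^ (q - 1)) := by
          gcongr
          exact oscInt_level ha hb hHm hH hK r hr1 n hnpos hNn t ht
      _ = _ := by
          rw [mul_assoc, mul_assoc]
          congr 2
          rw [← ENNReal.ofReal_inv_of_pos (by positivity), ← ENNReal.ofReal_mul (by positivity)]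
          congr 1
          have : t ^ (q - 1) = t ^ (q - 3) * t ^ 2 := by
            rw [← Real.rpow_natCast, ← Real.rpow_add ht]; congr 1; push_cast; ring
          rw [this]
          field_simp
          try norm_num
  have s3 : ∀ y, ∫⁻ t in Set.Ioi 0, G t y = ENNReal.ofReal (4 * 2 ^ (q - 2) / (q - 2)) *
      ENNReal.ofReal (n ^ (q - 2)) * ‖H y‖ₑ ^ r := by
    intro y
    simp only [hG]
    rcases eq_or_ne (H y) 0 with hy | hy
    · simp [hy, show 0 < r by linarith]
    have hpos : 0 < ‖H y‖ := norm_pos_iff.2 hy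
    set h := ‖H y‖ with hh
    set A := 2 * n / h ^ (r - 1) with hA
    have hApos : 0 < A := by positivity
    have e1 : ∀ t, (if h ^ (r - 1) * t ≤ 2 * n then ‖H y‖ₑ ^ 2 else 0) * ENNReal.ofReal (4 * t ^ (q - 3)) =
        (Set.Iic A).indicator (fun t => ‖H y‖ₑ ^ 2 * ENNReal.ofReal 4 * ENNReal.ofReal (t ^ (q - 3))) t := by
      intro t
      have : h ^ (r - 1) * t ≤ 2 * n ↔ t ≤ A := by
        rw [hA, le_div_iff₀ (by positivity), mul_comm]
      rw [Set.indicator_apply, ENNReal.ofReal_mul (by norm_num)]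
      simp only [this, Set.mem_Iic]
      split_ifs
      · ring
      · simp
    simp_rw [e1]
    rw [lintegral_indicator measurableSet_Iic, Measure.restrict_restrict measurableSet_Iic,
      Set.inter_comm, Set.Ioi_inter_Iic,
      lintegral_const_mul _ (by fun_prop), lint_rpow_Ioc A (q - 3) hApos (by linarith), ← ofReal_norm, ← hh,
      ← ENNReal.ofReal_pow hpos.le, ENNReal.ofReal_rpow_of_pos hpos, ← ENNReal.ofReal_mul (by positivity),
      ← ENNReal.ofReal_mul (by positivity), ← ENNReal.ofReal_mul (by have : 0 < q - 2 := by linarith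
                                                                     positivity),
      ← ENNReal.ofReal_mul (by have : 0 < q - 2 := by linarith
                               positivity)]
    congr 1
    have e2 : q - 3 + 1 = q - 2 := by ring
    have e3 : A ^ (q - 2) = 2 ^ (q - 2) * n ^ (q - 2) * h ^ (r - 2) := by
      rw [hA, Real.div_rpow (by positivity) (by positivity), Real.mul_rpow (by norm_num) hnpos.le,
        ← Real.rpow_mul hpos.le, div_eq_mul_inv, ← Real.rpow_neg hpos.le]
      congr 2
      linarith
    have e4 : h ^ r = h ^ 2 * h ^ (r - 2) := by
      rw [← Real.rpow_natCast, ← Real.rpow_add hpos]; congr 1; push_cast; ring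
    rw [e2, e3, e4]
    ring
  rw [s1]
  calc _ ≤ ENNReal.ofReal q * ∫⁻ t in Set.Ioi 0, K' * ∫⁻ y, G t y ∂μ := by
        gcongr ENNReal.ofReal q * ?_
        exact setLIntegral_mono' measurableSet_Ioi s2
    _ = ENNReal.ofReal q * (K' * ∫⁻ y, (∫⁻ t in Set.Ioi 0, G t y) ∂μ) := by
        rw [lintegral_const_mul _ (show Measurable fun t => ∫⁻ y, G t y ∂μ from hGm.lintegral_prod_right'), lintegral_lintegral_swap hGm.aemeasurable]
    _ = _ := by
        simp_rw [s3]
        rw [lintegral_const_mul _ (by fun_prop), ← hNdef]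
        have : N ^ (q - 1) = ENNReal.ofReal (n ^ (q - 2)) * N := by
          rw [show q - 1 = (q - 2) + 1 by ring, ENNReal.rpow_add _ _ h0 hN, ENNReal.rpow_one, hNn,
            ENNReal.ofReal_rpow_of_pos hnpos]
        rw [this]
        ring

lemma lint_abs_lt (l R : ℝ) (hl : l < 1) (hR : 0 < R) (x : ℝ) :
    ∫⁻ y, (if |x - y| ≤ R then ENNReal.ofReal (|x - y| ^ (-l)) else 0) =
      2 * ENNReal.ofReal (R ^ (1 - l) / (1 - l)) := by
  rw [lintegral_sub_left_eq_self (fun y => if |y| ≤ R then ENNReal.ofReal (|y| ^ (-l)) else 0) x]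
  have hpos : ∫⁻ y in Set.Ioi 0, (if |y| ≤ R then ENNReal.ofReal (|y| ^ (-l)) else 0) =
      ENNReal.ofReal (R ^ (1 - l) / (1 - l)) := by
    have := lint_rpow_Ioc R (-l) hR (by linarith)
    rw [show -l + 1 = 1 - l by ring] at this
    rw [← this, ← Set.Ioi_inter_Iic, Set.inter_comm, ← Measure.restrict_restrict measurableSet_Iic,
      ← lintegral_indicator measurableSet_Iic]
    refine setLIntegral_congr_fun measurableSet_Ioi fun y hy => ?_
    have hy : 0 < y := hy
    simp only [abs_of_pos hy, Set.indicator_apply, Set.mem_Iic]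
  rw [← lintegral_add_compl _ (measurableSet_Ioi (a := (0 : ℝ))), two_mul, hpos]
  congr 1
  rw [← hpos, Set.compl_Ioi, ← restrict_Iio_eq_restrict_Iic]
  rw [← (Measure.measurePreserving_neg (volume : Measure ℝ)).setLIntegral_comp_preimage
    measurableSet_Iio (by
      refine Measurable.ite ?_ (by fun_prop) measurable_const
      exact measurableSet_le (by fun_prop) measurable_const)]
  simp

lemma lint_abs_ge (R : ℝ) (hR : 0 < R) (x : ℝ) :
    ∫⁻ y, (if R < |x - y| then ENNReal.ofReal (|x - y| ^ (-2 : ℝ)) else 0) =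
      2 * ENNReal.ofReal R⁻¹ := by
  rw [lintegral_sub_left_eq_self (fun y => if R < |y| then ENNReal.ofReal (|y| ^ (-2 : ℝ)) else 0) x]
  have hpos : ∫⁻ y in Set.Ioi 0, (if R < |y| then ENNReal.ofReal (|y| ^ (-2 : ℝ)) else 0) =
      ENNReal.ofReal R⁻¹ := by
    have h1 := integral_Ioi_rpow_of_lt (a := -2) (by norm_num) hR
    have h2 := ofReal_integral_eq_lintegral_ofReal (integrableOn_Ioi_rpow_of_lt (a := -2) (by norm_num) hR)
      ((ae_restrict_iff' measurableSet_Ioi).2 (Filter.Eventually.of_forall fun y hy =>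
        Real.rpow_nonneg (hR.trans hy).le _))
    rw [h1] at h2
    have e : -R ^ (-2 + 1 : ℝ) / (-2 + 1) = R⁻¹ := by
      norm_num [Real.rpow_neg_one]
    rw [e] at h2
    have hI : Set.Ioi R = Set.Ioi R ∩ Set.Ioi 0 := by
      rw [Set.Ioi_inter_Ioi, sup_of_le_left hR.le]
    rw [h2, hI, ← Measure.restrict_restrict (measurableSet_Ioi (a := R)),
      ← lintegral_indicator (measurableSet_Ioi (a := R))]
    refine setLIntegral_congr_fun measurableSet_Ioi fun y hy => ?_
    have hy : 0 < y := hy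
    simp only [abs_of_pos hy, Set.indicator_apply, Set.mem_Ioi]
  rw [← lintegral_add_compl _ (measurableSet_Ioi (a := (0 : ℝ))), two_mul, hpos]
  congr 1
  rw [← hpos, Set.compl_Ioi, ← restrict_Iio_eq_restrict_Iic]
  rw [← (Measure.measurePreserving_neg (volume : Measure ℝ)).setLIntegral_comp_preimage
    measurableSet_Iio (by
      refine Measurable.ite ?_ (by fun_prop) measurable_const
      exact measurableSet_lt measurable_const (by fun_prop))]
  simp

/-- The one-sided part of the diagonal Hardy-Littlewood-Sobolev inequality. -/
lemma hls_inner (l s : ℝ) (hl0 : 0 < l) (hl1 : l < 1) (hs : s * (2 - l) = 2) {g : ℝ → ℝ}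
    (hg : Measurable g) (hg0 : ∀ x, 0 ≤ g x) (M : ℝ) (hM : 0 < M)
    (hMi : ∫⁻ x, ENNReal.ofReal (g x ^ s) = ENNReal.ofReal M) (x : ℝ) (hx : 0 < g x) :
    ∫⁻ y, (if g y ≤ g x then ENNReal.ofReal (g y) * ENNReal.ofReal (|x - y| ^ (-l)) else 0) ≤
      ENNReal.ofReal ((2 / (1 - l) + 2 ^ (l / 2)) * (M ^ (1 - l) * g x ^ (s - 1))) := by
  have hs0 : 0 < s := by
    by_contra h
    nlinarith
  have hs1 : 1 < s := by nlinarith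
  set A := g x with hA
  set R := M * A ^ (-s) with hR
  have hRpos : 0 < R := by positivity
  have hconj : s.HolderConjugate (2 / l) := by
    rw [Real.holderConjugate_iff]
    refine ⟨hs1, ?_⟩
    have : s⁻¹ = (2 - l) / 2 := by
      field_simp; linarith
    rw [this]; field_simp; ring
  set f2 : ℝ → ℝ≥0∞ := fun y => if R < |x - y| then ENNReal.ofReal (|x - y| ^ (-l)) else 0 with hf2
  have hf2m : Measurable f2 := by
    refine Measurable.ite ?_ (by fun_prop) measurable_const
    exact measurableSet_lt measurable_const (by fun_prop)
  have hf1m : Measurable (fun y => if |x - y| ≤ R then ENNReal.ofReal (|x - y| ^ (-l)) else 0) := by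
    refine Measurable.ite ?_ (by fun_prop) measurable_const
    exact measurableSet_le (by fun_prop) measurable_const
  have hH := ENNReal.lintegral_mul_le_Lp_mul_Lq volume hconj
    (f := fun y => ENNReal.ofReal (g y)) (g := f2) (by fun_prop) hf2m.aemeasurable
  have e1 : ∫⁻ y, ENNReal.ofReal (g y) ^ s = ENNReal.ofReal M := by
    rw [← hMi]
    exact lintegral_congr fun y => ENNReal.ofReal_rpow_of_nonneg (hg0 y) hs0.le
  have e2 : ∫⁻ y, f2 y ^ (2 / l) = 2 * ENNReal.ofReal R⁻¹ := by
    rw [← lint_abs_ge R hRpos x]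
    refine lintegral_congr fun y => ?_
    simp only [hf2]
    split_ifs with h
    · rw [ENNReal.ofReal_rpow_of_nonneg (by positivity) (by positivity), ← Real.rpow_mul (abs_nonneg _)]
      congr 2
      field_simp
    · exact ENNReal.zero_rpow_of_pos (by positivity)
  rw [e1, e2] at hH
  have hs' : 1 / s = 1 - l / 2 := by field_simp; linarith
  have e3 : ENNReal.ofReal M ^ (1 / s) * (2 * ENNReal.ofReal R⁻¹) ^ (1 / (2 / l)) =
      ENNReal.ofReal (2 ^ (l / 2) * (M ^ (1 - l) * A ^ (s - 1))) := by
    rw [show (2 : ℝ≥0∞) = ENNReal.ofReal 2 by norm_num, ← ENNReal.ofReal_mul (by norm_num),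
      ENNReal.ofReal_rpow_of_pos hM, ENNReal.ofReal_rpow_of_pos (by positivity),
      ← ENNReal.ofReal_mul (by positivity)]
    congr 1
    rw [one_div_div, Real.mul_rpow (by norm_num) (by positivity), hR, mul_inv, Real.mul_rpow (by positivity) (by positivity),
      ← Real.rpow_neg hx.le, ← Real.rpow_mul hx.le, hs', Real.inv_rpow hM.le, ← Real.rpow_neg hM.le]
    have : M ^ (1 - l) = M ^ (1 - l / 2) * M ^ (-(l / 2)) := by
      rw [← Real.rpow_add hM]; congr 1; ring
    rw [this, show - -s * (l / 2) = s - 1 by linarith]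
    ring
  rw [e3] at hH
  calc _ ≤ ∫⁻ y, (ENNReal.ofReal A * (if |x - y| ≤ R then ENNReal.ofReal (|x - y| ^ (-l)) else 0) +
        ENNReal.ofReal (g y) * f2 y) := by
        refine lintegral_mono fun y => ?_
        simp only [hf2]
        rcases le_or_gt |x - y| R with h | h
        · rw [if_pos h, if_neg h.not_gt, mul_zero, add_zero]
          split_ifs with h'
          · gcongr
          · exact zero_le
        · rw [if_neg h.not_ge, if_pos h, mul_zero, zero_add]
          split_ifs with h'
          · exact le_rfl
          · exact zero_le
    _ = ENNReal.ofReal A * (2 * ENNReal.ofReal (R ^ (1 - l) / (1 - l))) + ∫⁻ y, ENNReal.ofReal (g y) * f2 y := by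
        rw [lintegral_add_left (by fun_prop), lintegral_const_mul _ hf1m, lint_abs_lt l R hl1 hRpos x]
    _ ≤ ENNReal.ofReal (2 / (1 - l) * (M ^ (1 - l) * A ^ (s - 1))) +
        ENNReal.ofReal (2 ^ (l / 2) * (M ^ (1 - l) * A ^ (s - 1))) := by
        gcongr ?_ + ?_
        · have h1l : 0 < 1 - l := by linarith
          rw [show (2 : ℝ≥0∞) = ENNReal.ofReal 2 by norm_num, ← ENNReal.ofReal_mul (by norm_num),
            ← ENNReal.ofReal_mul hx.le]
          apply le_of_eq
          congr 1
          rw [hR, Real.mul_rpow hM.le (by positivity), ← Real.rpow_mul hx.le]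
          have : A ^ (s - 1) = A * A ^ (-s * (1 - l)) := by
            rw [← Real.rpow_one_add' hx.le (by nlinarith)]
            congr 1; nlinarith
          rw [this]
          ring
        · exact hH
    _ = _ := by
        have h1l : 0 < 1 - l := by linarith
        rw [← ENNReal.ofReal_add (by positivity) (by positivity)]
        congr 1
        ring

/-- Diagonal Hardy-Littlewood-Sobolev inequality. -/
lemma hls (l s : ℝ) (hl0 : 0 < l) (hl1 : l < 1) (hs : s * (2 - l) = 2) {g : ℝ → ℝ}
    (hg : Measurable g) (hg0 : ∀ x, 0 ≤ g x)
    (hfin : ∫⁻ x, ENNReal.ofReal (g x ^ s) ≠ ⊤) :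
    ∫⁻ z : ℝ × ℝ, ENNReal.ofReal (g z.1) * ENNReal.ofReal (g z.2) * ENNReal.ofReal (|z.1 - z.2| ^ (-l)) ≤
      ENNReal.ofReal (2 * (2 / (1 - l) + 2 ^ (l / 2))) *
        (∫⁻ x, ENNReal.ofReal (g x ^ s)) ^ (2 - l) := by
  have hs0 : 0 < s := by
    by_contra h
    nlinarith
  have hs1 : 1 < s := by nlinarith
  have h1l : 0 < 1 - l := by linarith
  set N := ∫⁻ x, ENNReal.ofReal (g x ^ s) with hN
  rcases eq_or_ne N 0 with h0 | h0
  · have hae : ∀ᵐ x, g x = 0 := by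
      have := (lintegral_eq_zero_iff (by fun_prop)).1 h0
      filter_upwards [this] with y hy
      have h : g y ^ s ≤ 0 := by simpa using hy
      have h' := le_antisymm h (Real.rpow_nonneg (hg0 y) s)
      exact ((Real.rpow_eq_zero (hg0 y) hs0.ne').1 h')
    refine le_trans (le_of_eq ?_) zero_le
    rw [Measure.volume_eq_prod, lintegral_prod _ (by fun_prop), lintegral_eq_zero_iff' (by fun_prop)]
    filter_upwards [hae] with x hx
    simp [hx]
  set M := N.toReal with hM
  have hMpos : 0 < M := ENNReal.toReal_pos h0 hfin
  have hNM : N = ENNReal.ofReal M := (ENNReal.ofReal_toReal hfin).symm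
  set c := 2 / (1 - l) + (2 : ℝ) ^ (l / 2) with hc
  have hcpos : 0 < c := by positivity
  set P : ℝ → ℝ → ℝ≥0∞ := fun x y => ENNReal.ofReal (g x) *
    (if g y ≤ g x then ENNReal.ofReal (g y) * ENNReal.ofReal (|x - y| ^ (-l)) else 0) with hP
  have hPm' : Measurable fun z : ℝ × ℝ =>
    (if g z.2 ≤ g z.1 then ENNReal.ofReal (g z.2) * ENNReal.ofReal (|z.1 - z.2| ^ (-l)) else 0) := by
    refine Measurable.ite ?_ (by fun_prop) measurable_const
    exact measurableSet_le (by fun_prop) (by fun_prop)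
  have hPm : Measurable fun z : ℝ × ℝ => P z.1 z.2 := by
    simp only [hP]
    exact Measurable.mul (by fun_prop) hPm'
  have hPint : ∫⁻ x, ∫⁻ y, P x y ≤ ENNReal.ofReal c * N ^ (2 - l) := by
    calc ∫⁻ x, ∫⁻ y, P x y ≤ ∫⁻ x, ENNReal.ofReal (c * M ^ (1 - l)) * ENNReal.ofReal (g x ^ s) := by
          refine lintegral_mono fun x => ?_
          simp only [hP]
          rw [lintegral_const_mul _ (show Measurable fun y =>
            (if g y ≤ g x then ENNReal.ofReal (g y) * ENNReal.ofReal (|x - y| ^ (-l)) else 0) from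
            hPm'.comp measurable_prodMk_left)]
          rcases (hg0 x).eq_or_lt with h | h
          · rw [← h]; simp
          refine (mul_le_mul_right (hls_inner l s hl0 hl1 hs hg hg0 M hMpos hNM x h) _).trans (le_of_eq ?_)
          rw [← ENNReal.ofReal_mul h.le, ← ENNReal.ofReal_mul (by positivity)]
          congr 1
          have : g x ^ s = g x * g x ^ (s - 1) := by
            rw [← Real.rpow_one_add' h.le (by linarith)]; congr 1; ring
          rw [this]
          ring
      _ = ENNReal.ofReal c * N ^ (2 - l) := by
          rw [lintegral_const_mul _ (by fun_prop), ← hN, ENNReal.ofReal_mul hcpos.le, mul_assoc]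
          congr 1
          rw [show 2 - l = (1 - l) + 1 by ring, ENNReal.rpow_add _ _ h0 hfin, ENNReal.rpow_one, hNM,
            ENNReal.ofReal_rpow_of_pos hMpos]
  calc _ ≤ ∫⁻ z : ℝ × ℝ, (P z.1 z.2 + P z.2 z.1) := by
        refine lintegral_mono fun z => ?_
        simp only [hP]
        rcases le_total (g z.2) (g z.1) with h | h
        · rw [if_pos h, ← mul_assoc]
          exact le_self_add
        · rw [if_pos h, abs_sub_comm z.2 z.1, ← mul_assoc (ENNReal.ofReal (g z.2)),
            mul_comm (ENNReal.ofReal (g z.2)) (ENNReal.ofReal (g z.1))]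
          exact le_add_self
    _ = (∫⁻ x, ∫⁻ y, P x y) + ∫⁻ x, ∫⁻ y, P x y := by
        rw [lintegral_add_left hPm, Measure.volume_eq_prod, lintegral_prod _ hPm.aemeasurable,
          lintegral_prod_symm (fun z : ℝ × ℝ => P z.2 z.1) (hPm.comp measurable_swap).aemeasurable]
    _ ≤ _ := by
        refine (add_le_add hPint hPint).trans (le_of_eq ?_)
        rw [← two_mul, ENNReal.ofReal_mul (by norm_num), ← mul_assoc]
        norm_num

lemma cov_sq (c e : ℝ) (hc : c ≠ 0) (G : ℝ → ℝ≥0∞) :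
    ∫⁻ w, ‖w‖ₑ * G (c * (e + w ^ 2 / 2)) ≤ 2 * ENNReal.ofReal |c|⁻¹ * ∫⁻ v, G v := by
  have key : ∀ S : Set ℝ, MeasurableSet S → Set.InjOn (fun w : ℝ => c * (e + w ^ 2 / 2)) S →
      ∫⁻ w in S, ‖w‖ₑ * G (c * (e + w ^ 2 / 2)) ≤ ENNReal.ofReal |c|⁻¹ * ∫⁻ v, G v := by
    intro S hS hinj
    have h := lintegral_image_eq_lintegral_abs_deriv_mul (f := fun w : ℝ => c * (e + w ^ 2 / 2))
      (f' := fun w => c * w) hS (fun x _ => by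
        have h1 := ((((hasDerivAt_id x).pow 2).div_const 2).const_add e).const_mul c
        refine (h1.congr_deriv ?_).hasDerivWithinAt
        simp) hinj G
    have h2 : ∫⁻ w in S, ‖w‖ₑ * G (c * (e + w ^ 2 / 2)) = ENNReal.ofReal |c|⁻¹ *
        ∫⁻ w in S, ENNReal.ofReal |c * w| * G (c * (e + w ^ 2 / 2)) := by
      rw [← lintegral_const_mul' _ _ (by simp)]
      refine lintegral_congr fun w => ?_
      rw [← mul_assoc, ← ENNReal.ofReal_mul (by positivity), Real.enorm_eq_ofReal_abs]
      congr 2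
      rw [abs_mul]
      have : |c| ≠ 0 := by simpa using hc
      field_simp
    rw [h2, ← h]
    gcongr
    exact Measure.restrict_le_self
  have hsq : ∀ x y : ℝ, c * (e + x ^ 2 / 2) = c * (e + y ^ 2 / 2) → x ^ 2 = y ^ 2 := by
    intro x y h
    have := mul_left_cancel₀ hc h
    linarith
  rw [← lintegral_add_compl _ (measurableSet_Ioi (a := (0 : ℝ))), mul_assoc, two_mul]
  refine add_le_add (key _ measurableSet_Ioi ?_) (key _ measurableSet_Ioi.compl ?_)
  · intro x hx y hy h
    have hx : 0 < x := hx
    have hy : 0 < y := hy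
    rcases sq_eq_sq_iff_eq_or_eq_neg.1 (hsq x y h) with h | h <;> linarith
  · intro x hx y hy h
    have hx : x ≤ 0 := by simpa using hx
    have hy : y ≤ 0 := by simpa using hy
    rcases sq_eq_sq_iff_eq_or_eq_neg.1 (hsq x y h) with h | h <;> linarith

lemma lint_scale (c : ℝ) (hc : c ≠ 0) (G : ℝ → ℝ≥0∞) (hG : Measurable G) :
    ∫⁻ x, G (c * x) = ENNReal.ofReal |c⁻¹| * ∫⁻ x, G x := by
  rw [← lintegral_map hG (measurable_const_mul c), Real.map_volume_mul_left hc, lintegral_smul_measure]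
  rfl

/-- The measure `|ξ - η| dξ dη`. -/
noncomputable def pairMeasure : Measure (ℝ × ℝ) :=
  (volume : Measure (ℝ × ℝ)).withDensity (fun y => ((‖y.1 - y.2‖₊ : NNReal) : ℝ≥0∞))

noncomputable instance : SFinite pairMeasure := by unfold pairMeasure; infer_instance

lemma pairMeasure_lint (g : ℝ × ℝ → ℝ≥0∞) (hg : Measurable g) :
    ∫⁻ y, g y ∂pairMeasure = ∫⁻ y : ℝ × ℝ, ‖y.1 - y.2‖ₑ * g y := by
  unfold pairMeasure
  rw [lintegral_withDensity_eq_lintegral_mul _ (by fun_prop) hg]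
  rfl

lemma pairMeasure_push (c d : ℝ) (hc : c ≠ 0) (hd : d ≠ 0) (g : ℝ × ℝ → ℝ≥0∞) (hg : Measurable g) :
    ∫⁻ y, g (c * (y.1 ^ 2 + y.2 ^ 2), d * (y.1 + y.2)) ∂pairMeasure ≤
      (2 * ENNReal.ofReal |c|⁻¹ * ENNReal.ofReal |(2 * d)⁻¹|) * ∫⁻ z, g z := by
  rw [pairMeasure_lint _ (by fun_prop), Measure.volume_eq_prod, lintegral_prod_symm _ (by fun_prop)]
  calc _ = ∫⁻ η : ℝ, ∫⁻ w : ℝ, ‖w‖ₑ * g (c * ((w + η) ^ 2 + η ^ 2), d * ((w + η) + η)) := by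
        refine lintegral_congr fun η => ?_
        rw [← lintegral_add_right_eq_self _ η]
        simp
    _ = ∫⁻ w : ℝ, ∫⁻ η : ℝ, ‖w‖ₑ * g (c * ((w + η) ^ 2 + η ^ 2), d * ((w + η) + η)) := by
        rw [lintegral_lintegral_swap (by unfold Function.uncurry; fun_prop)]
    _ = ∫⁻ w : ℝ, ∫⁻ η : ℝ, ‖w‖ₑ * g (c * (2 * η ^ 2 + w ^ 2 / 2), 2 * d * η) := by
        refine lintegral_congr fun w => ?_
        rw [← lintegral_add_right_eq_self _ (-(w / 2))]
        refine lintegral_congr fun η => ?_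
        congr 3 <;> ring
    _ = ∫⁻ η : ℝ, ∫⁻ w : ℝ, ‖w‖ₑ * g (c * (2 * η ^ 2 + w ^ 2 / 2), 2 * d * η) := by
        rw [lintegral_lintegral_swap (by unfold Function.uncurry; fun_prop)]
    _ ≤ ∫⁻ η : ℝ, 2 * ENNReal.ofReal |c|⁻¹ * ∫⁻ v : ℝ, g (v, 2 * d * η) := by
        refine lintegral_mono fun η => ?_
        exact cov_sq c (2 * η ^ 2) hc (fun v => g (v, 2 * d * η))
    _ = _ := by
        have hm : Measurable fun u : ℝ => ∫⁻ v : ℝ, g (v, u) := hg.lintegral_prod_left'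
        rw [lintegral_const_mul _ (show Measurable fun u : ℝ => ∫⁻ v : ℝ, g (v, 2 * d * u) from
            hm.comp (measurable_const_mul (2 * d))),
          lint_scale (2 * d) (by simpa using hd) _ hm, lintegral_prod_symm _ (by fun_prop), mul_assoc, mul_assoc, mul_assoc]

lemma ae_ne_diag : ∀ᵐ y : ℝ × ℝ, y.1 ≠ y.2 := by
  rw [ae_iff, Measure.volume_eq_prod, Measure.measure_prod_null]
  · refine Filter.Eventually.of_forall fun x => ?_
    have : (Prod.mk x ⁻¹' {a : ℝ × ℝ | ¬a.1 ≠ a.2}) = {x} := by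
      ext y; simp [eq_comm]
    simp only [this]; simp
  · simp only [not_not]
    exact measurableSet_eq_fun measurable_fst measurable_snd

/-- The amplitude `f(ξ) f(η) / |ξ - η|`. -/
noncomputable def pairAmp (f : ℝ → ℂ) (y : ℝ × ℝ) : ℂ :=
  (f y.1 * f y.2) / ((|y.1 - y.2| : ℝ) : ℂ)

lemma pairAmp_smul (f : ℝ → ℂ) (y : ℝ × ℝ) (hy : y.1 ≠ y.2) (w : ℂ) :
    ‖y.1 - y.2‖₊ • (w * pairAmp f y) = w * (f y.1 * f y.2) := by
  have h : ((|y.1 - y.2| : ℝ) : ℂ) ≠ 0 := by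
    have := sub_ne_zero.2 hy
    exact_mod_cast abs_ne_zero.2 this
  rw [NNReal.smul_def, coe_nnnorm, Real.norm_eq_abs, Complex.real_smul]
  unfold pairAmp
  field_simp

lemma pairAmp_measurable {f : ℝ → ℂ} (hf : Continuous f) : Measurable (pairAmp f) := by
  unfold pairAmp
  have := hf.measurable
  fun_prop

lemma pairAmp_integrable {f : ℝ → ℂ} (hf : Integrable f) :
    Integrable (pairAmp f) pairMeasure := by
  unfold pairMeasure
  rw [integrable_withDensity_iff_integrable_smul (by fun_prop)]
  have h := hf.mul_prod hf
  rw [← Measure.volume_eq_prod] at h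
  refine h.congr ?_
  filter_upwards [ae_ne_diag] with y hy
  have := pairAmp_smul f y hy 1
  rw [one_mul, one_mul] at this
  exact this.symm

lemma pairAmp_rpow {f : ℝ → ℂ} (hf : Continuous f) (r : ℝ) (hr : 1 < r) :
    ∫⁻ y, ‖pairAmp f y‖ₑ ^ r ∂pairMeasure =
    ∫⁻ z : ℝ × ℝ, ENNReal.ofReal (‖f z.1‖ ^ r) * ENNReal.ofReal (‖f z.2‖ ^ r) *
      ENNReal.ofReal (|z.1 - z.2| ^ (-(r - 1))) := by
  have hm := pairAmp_measurable hf
  rw [pairMeasure_lint _ (by fun_prop)]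
  refine lintegral_congr fun z => ?_
  rw [enorm_rpow_ofReal _ _ (by linarith), Real.enorm_eq_ofReal_abs, ← ENNReal.ofReal_mul (by positivity),
    ← ENNReal.ofReal_mul (by positivity), ← ENNReal.ofReal_mul (by positivity)]
  congr 1
  rcases (abs_nonneg (z.1 - z.2)).eq_or_lt with h | h
  · rw [← h, Real.zero_rpow (by linarith)]; simp
  · unfold pairAmp
    rw [norm_div, norm_mul, Complex.norm_of_nonneg h.le, Real.div_rpow (by positivity) h.le,
      Real.mul_rpow (by positivity) (by positivity)]
    have : |z.1 - z.2| ^ (-(r - 1)) = |z.1 - z.2| / |z.1 - z.2| ^ r := by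
      rw [show -(r - 1) = 1 - r by ring, Real.rpow_sub h, Real.rpow_one]
    rw [this]
    ring

lemma schrod1_sq (φ : ℝ → ℂ) (z : ℝ × ℝ) :
    schrod1 z.1 φ z.2 ^ 2 = oscInt pairMeasure (fun y => (-(4 * π ^ 2)) * (y.1 ^ 2 + y.2 ^ 2))
      (fun y => (2 * π) * (y.1 + y.2)) (pairAmp (𝓕 φ)) z := by
  unfold oscInt pairMeasure
  rw [integral_withDensity_eq_integral_smul (by fun_prop), sq]
  unfold schrod1
  rw [← integral_prod_mul, ← Measure.volume_eq_prod]
  refine integral_congr_ae ?_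
  filter_upwards [ae_ne_diag] with y hy
  rw [pairAmp_smul _ _ hy]
  have : ((z.1 * (-(4 * π ^ 2) * (y.1 ^ 2 + y.2 ^ 2)) + z.2 * (2 * π * (y.1 + y.2)) : ℝ) : ℂ) * Complex.I =
    (-(4 * (π : ℂ) ^ 2 * (z.1 : ℂ) * (y.1 : ℂ) ^ 2) * Complex.I + 2 * (π : ℂ) * Complex.I * (z.2 : ℂ) * (y.1 : ℂ))
    + (-(4 * (π : ℂ) ^ 2 * (z.1 : ℂ) * (y.2 : ℂ) ^ 2) * Complex.I + 2 * (π : ℂ) * Complex.I * (z.2 : ℂ) * (y.2 : ℂ)) := by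
    push_cast; ring
  rw [this, Complex.exp_add, Complex.exp_add, Complex.exp_add]
  ring

theorem generalized_strichartz_1d (p p' : ℝ) (hp1 : 4 / 3 < p) (hp2 : p ≤ 2)
    (hpp' : 1 / p + 1 / p' = 1) :
    ∃ C : ℝ, 0 < C ∧ ∀ φ : SchwartzMap ℝ ℂ,
      eLpNorm (fun z : ℝ × ℝ => schrod1 z.1 (⇑φ) z.2)
          (ENNReal.ofReal (3 * p)) (volume : Measure (ℝ × ℝ)) ≤
        ENNReal.ofReal C * eLpNorm (𝓕 (⇑φ)) (ENNReal.ofReal p') (volume : Measure ℝ) := by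
  have hp0 : 0 < p := by linarith
  have hpm : 0 < p - 1 := by linarith
  have h32 : 0 < 3 * p - 2 := by linarith
  have hp'0 : p' ≠ 0 := by
    rintro rfl
    simp at hpp'
    linarith
  have hp' : p' = p / (p - 1) := by
    field_simp at hpp' ⊢
    linarith
  have hp'pos : 0 < p' := by rw [hp']; positivity
  obtain ⟨r, hr⟩ : ∃ r, r = 3 * p / (3 * p - 2) := ⟨_, rfl⟩
  obtain ⟨q, hq⟩ : ∃ q, q = 3 * p / 2 := ⟨_, rfl⟩
  obtain ⟨l, hl⟩ : ∃ l, l = r - 1 := ⟨_, rfl⟩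
  obtain ⟨s, hs⟩ : ∃ s, s = p' / r := ⟨_, rfl⟩
  have hrm : r - 1 = 2 / (3 * p - 2) := by rw [hr]; field_simp; ring
  have hr1 : 1 < r := by
    have : 0 < r - 1 := by rw [hrm]; positivity
    linarith
  have hr2 : r < 2 := by rw [hr, div_lt_iff₀ h32]; linarith
  have hqr : q = r / (r - 1) := by rw [hrm, hr, hq]; field_simp
  have h2l : 2 - l = (6 * p - 6) / (3 * p - 2) := by rw [hl, hr]; field_simp; ring
  have hs2 : s * (2 - l) = 2 := by 
    have h1 := h32.ne'
    have h2 := hpm.ne'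
    rw [hs, h2l, hp', hr, show 6 * p - 6 = 6 * (p - 1) by ring]
    generalize hu : p - 1 = u at *
    generalize hv : 3 * p - 2 = v at *
    field_simp
    try norm_num
  have hrs : r * s = p' := by rw [hs]; field_simp
  have hexp : (2 - l) * (q - 1) * (1 / (3 * p)) = 1 / p' := by
    have h1 := h32.ne'
    have h2 := hpm.ne'
    rw [h2l, hq, hp', show 6 * p - 6 = 6 * (p - 1) by ring,
      show 3 * p / 2 - 1 = (3 * p - 2) / 2 by ring]
    generalize hu : p - 1 = u at *
    generalize hv : 3 * p - 2 = v at *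
    field_simp
    try norm_num
  set K : ℝ≥0∞ := 2 * ENNReal.ofReal |-(4 * π ^ 2)|⁻¹ * ENNReal.ofReal |(2 * (2 * π))⁻¹| with hK
  set C1 : ℝ≥0∞ := ENNReal.ofReal q * (K * ENNReal.ofReal (4 * π ^ 2)) *
    ENNReal.ofReal (4 * 2 ^ (q - 2) / (q - 2)) with hC1
  set C2 : ℝ≥0∞ := ENNReal.ofReal (2 * (2 / (1 - l) + 2 ^ (l / 2))) with hC2
  set C3 : ℝ≥0∞ := (C1 * C2 ^ (q - 1)) ^ (1 / (3 * p)) with hC3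
  have hq1 : 0 < q - 1 := by rw [hq]; linarith
  have hC1t : C1 ≠ ⊤ := by
    simp only [hC1, hK]
    finiteness
  have hC3t : C3 ≠ ⊤ := by
    refine ENNReal.rpow_ne_top_of_nonneg (by positivity) (ENNReal.mul_ne_top hC1t ?_)
    exact ENNReal.rpow_ne_top_of_nonneg hq1.le ENNReal.ofReal_ne_top
  refine ⟨C3.toReal + 1, by positivity, fun φ => ?_⟩
  obtain ⟨ψ, hψ⟩ : ∃ ψ : SchwartzMap ℝ ℂ, 𝓕 (⇑φ) = ⇑ψ := ⟨𝓕 φ, SchwartzMap.fourier_coe φ⟩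
  have hcont : Continuous (𝓕 (⇑φ)) := by rw [hψ]; exact ψ.continuous
  have hInteg : Integrable (𝓕 (⇑φ)) := by rw [hψ]; exact ψ.integrable
  have hmem : MemLp (𝓕 (⇑φ)) (ENNReal.ofReal p') := by rw [hψ]; exact ψ.memLp _ _
  set f := 𝓕 (⇑φ) with hf
  have hp'e : ENNReal.ofReal p' ≠ 0 := by simpa using hp'pos
  have h3pe : ENNReal.ofReal (3 * p) ≠ 0 := by simpa using hp0
  have hM1 : ∫⁻ x, ENNReal.ofReal ((‖f x‖ ^ r) ^ s) = ∫⁻ x, ‖f x‖ₑ ^ p' := by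
    refine lintegral_congr fun x => ?_
    rw [enorm_rpow_ofReal _ _ hp'pos.le, ← Real.rpow_mul (norm_nonneg _), hrs]
  have hMfin : ∫⁻ x, ‖f x‖ₑ ^ p' ≠ ⊤ := by
    have := lintegral_rpow_enorm_lt_top_of_eLpNorm_lt_top hp'e ENNReal.ofReal_ne_top hmem.2
    rw [ENNReal.toReal_ofReal hp'pos.le] at this
    exact this.ne
  set M := ∫⁻ x, ‖f x‖ₑ ^ p' with hM
  have hfm := hcont.measurable
  have hH := hls l s (by linarith) (by linarith) hs2 (g := fun x => ‖f x‖ ^ r) (by fun_prop)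
    (fun x => by positivity) (by rw [hM1]; exact hMfin)
  rw [hM1, hl, ← pairAmp_rpow hcont r hr1, ← hl] at hH
  have hNfin : ∫⁻ y, ‖pairAmp f y‖ₑ ^ r ∂pairMeasure ≠ ⊤ := by
    refine ne_top_of_le_ne_top ?_ hH
    exact ENNReal.mul_ne_top ENNReal.ofReal_ne_top
      (ENNReal.rpow_ne_top_of_nonneg (by linarith) hMfin)
  have hHY := oscInt_HY (μ := pairMeasure) (a := fun y => (-(4 * π ^ 2)) * (y.1 ^ 2 + y.2 ^ 2))
    (b := fun y => (2 * π) * (y.1 + y.2)) (by fun_prop) (by fun_prop) (pairAmp_measurable hcont)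
    (pairAmp_integrable hInteg) (K := K)
    (fun g hg => pairMeasure_push (-(4 * π ^ 2)) (2 * π)
      (neg_ne_zero.2 (by positivity)) (by positivity) g hg) r q hr1 hr2 hqr hNfin
  have hU : ∫⁻ z : ℝ × ℝ, ‖schrod1 z.1 (⇑φ) z.2‖ₑ ^ (3 * p) ≤ C1 * (C2 * M ^ (2 - l)) ^ (q - 1) := by
    calc _ = ∫⁻ z, ‖oscInt pairMeasure (fun y => (-(4 * π ^ 2)) * (y.1 ^ 2 + y.2 ^ 2))
          (fun y => (2 * π) * (y.1 + y.2)) (pairAmp f) z‖ₑ ^ q := by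
          refine lintegral_congr fun z => ?_
          rw [hf, ← schrod1_sq, enorm_pow, ← ENNReal.rpow_natCast, ← ENNReal.rpow_mul]
          congr 1
          rw [hq]; push_cast; ring
      _ ≤ _ := hHY
      _ ≤ _ := by gcongr
  rw [eLpNorm_eq_lintegral_rpow_enorm_toReal h3pe ENNReal.ofReal_ne_top,
    eLpNorm_eq_lintegral_rpow_enorm_toReal hp'e ENNReal.ofReal_ne_top,
    ENNReal.toReal_ofReal hp'pos.le, ENNReal.toReal_ofReal (by positivity), ← hM]
  calc _ ≤ (C1 * (C2 * M ^ (2 - l)) ^ (q - 1)) ^ (1 / (3 * p)) := by gcongr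
    _ = C3 * M ^ (1 / p') := by
        rw [ENNReal.mul_rpow_of_nonneg _ _ hq1.le, ← mul_assoc,
          ENNReal.mul_rpow_of_nonneg _ _ (by positivity), ← ENNReal.rpow_mul, ← ENNReal.rpow_mul,
          ← mul_assoc, hexp]
    _ ≤ _ := by
        gcongr
        rw [← ENNReal.ofReal_toReal hC3t]
        apply ENNReal.ofReal_le_ofReal
        simp
end
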